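/- arXiv:1903.11939 — 6 statements merged into one kernel-verified Lean document; each statement's English description precedes it below -/
import Mathlib

section
/- Let 0 < α ≤ 1. Then for every real r, the Mittag-Leffler function E_α is differentiable at r and its derivative satisfies E_α'(r) = (1/α) · E_{α,α}(r). -/
open Real

/-- The Mittag-Leffler function `E_α(r) = ∑ r^k / Γ(1+kα)`. -/
noncomputable def mittagLeffler (α r : ℝ) : ℝ :=
  ∑' k : ℕ, r ^ k / Real.Gamma (1 + k * α)

/-- The Mittag-Leffler function `E_{α,α}(r) = ∑ r^k / Γ(α+kα)`. -/
noncomputable def mittagLefflerAA (α r : ℝ) : ℝ :=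
  ∑' k : ℕ, r ^ k / Real.Gamma (α + k * α)

/-- Restricting the Euler integral to `(M, M + 1]` bounds `Γ` below by exponentials of any base. -/
theorem rpow_mul_exp_le_Gamma {M x : ℝ} (hM : 0 < M) (hx : 1 ≤ x) :
    M ^ (x - 1) * exp (-(M + 1)) ≤ Gamma x := by
  have hx0 : 0 < x := by linarith
  have hint := GammaIntegral_convergent hx0
  have hsub : Set.Ioc M (M + 1) ⊆ Set.Ioi 0 := fun t ht => hM.trans ht.1
  calc M ^ (x - 1) * exp (-(M + 1))
      = ∫ _ in Set.Ioc M (M + 1), M ^ (x - 1) * exp (-(M + 1)) := by simp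
    _ ≤ ∫ t in Set.Ioc M (M + 1), exp (-t) * t ^ (x - 1) := by
        refine MeasureTheory.setIntegral_mono_on
          (MeasureTheory.integrableOn_const measure_Ioc_lt_top.ne) (hint.mono_set hsub)
          measurableSet_Ioc fun t ht => ?_
        rw [mul_comm]
        have h1 : M ^ (x - 1) ≤ t ^ (x - 1) :=
          rpow_le_rpow hM.le ht.1.le (by linarith)
        have h2 : exp (-(M + 1)) ≤ exp (-t) := exp_le_exp.2 (by linarith [ht.2])
        gcongr
    _ ≤ ∫ t in Set.Ioi 0, exp (-t) * t ^ (x - 1) := by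
        refine MeasureTheory.setIntegral_mono_set hint ?_ hsub.eventuallyLE
        filter_upwards [MeasureTheory.ae_restrict_mem measurableSet_Ioi] with t ht
        have : 0 < t := ht
        simp only [Pi.zero_apply]
        positivity
    _ = Gamma x := (Gamma_eq_integral hx0).symm

/-- The two-parameter Mittag-Leffler series converges everywhere. -/
theorem summable_pow_div_Gamma {α : ℝ} (hα : 0 < α) (β r : ℝ) :
    Summable fun k : ℕ => r ^ k / Gamma (β + k * α) := by
  have hB : 0 < 2 * |r| + 1 := by positivity
  obtain ⟨M, hM, hMα⟩ : ∃ M : ℝ, 0 < M ∧ M ^ α = 2 * |r| + 1 :=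
    ⟨(2 * |r| + 1) ^ α⁻¹, by positivity, rpow_inv_rpow hB.le hα.ne'⟩
  have hq : |r| / (2 * |r| + 1) < 1 := by
    rw [div_lt_one hB]
    linarith [abs_nonneg r]
  refine Summable.of_norm_bounded_eventually_nat
    ((summable_geometric_of_lt_one (by positivity) hq).mul_left
      (M ^ (β - 1) * exp (-(M + 1)))⁻¹) ?_
  have hlarge : ∀ᶠ k : ℕ in Filter.atTop, 1 ≤ β + k * α :=
    (Filter.tendsto_atTop_add_const_left _ β
      (tendsto_natCast_atTop_atTop.atTop_mul_const hα)).eventually_ge_atTop 1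
  filter_upwards [hlarge] with k hk
  have hΓ := rpow_mul_exp_le_Gamma hM hk
  have hsplit : M ^ (β + k * α - 1) = M ^ (β - 1) * (2 * |r| + 1) ^ k := by
    rw [← hMα, ← rpow_natCast, ← rpow_mul hM.le, ← rpow_add hM]
    ring_nf
  rw [hsplit] at hΓ
  have hpos : 0 < Gamma (β + k * α) := Gamma_pos_of_pos (by linarith)
  rw [norm_div, norm_pow, norm_eq_abs, norm_eq_abs, abs_of_pos hpos]
  calc |r| ^ k / Gamma (β + k * α)
      ≤ |r| ^ k / (M ^ (β - 1) * (2 * |r| + 1) ^ k * exp (-(M + 1))) := by gcongr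
    _ = (M ^ (β - 1) * exp (-(M + 1)))⁻¹ * (|r| / (2 * |r| + 1)) ^ k := by
        rw [div_pow]
        field_simp

theorem succ_mul_pow_div_Gamma {α : ℝ} (hα : 0 < α) (r : ℝ) (k : ℕ) :
    ((k + 1 : ℕ) : ℝ) * r ^ k / Gamma (1 + (k + 1 : ℕ) * α) =
      1 / α * (r ^ k / Gamma (α + k * α)) := by
  have hpos : 0 < α + k * α := by positivity
  have hΓ := (Gamma_pos_of_pos hpos).ne'
  have harg : 1 + ((k + 1 : ℕ) : ℝ) * α = (α + k * α) + 1 := by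
    push_cast
    ring
  rw [harg, Gamma_add_one hpos.ne', show α + k * α = (k + 1) * α by ring] at *
  push_cast
  field_simp

theorem mittagLeffler_hasDerivAt (α : ℝ) (hα : 0 < α) (hα1 : α ≤ 1) (r : ℝ) :
    HasDerivAt (mittagLeffler α) ((1 / α) * mittagLefflerAA α r) r := by
  have hterm (x : ℝ) (k : ℕ) := succ_mul_pow_div_Gamma hα x k
  have hderiv (x : ℝ) : Summable fun k : ℕ => (k : ℝ) * x ^ (k - 1) / Gamma (1 + k * α) := by
    rw [← summable_nat_add_iff 1]
    simp only [Nat.add_sub_cancel, hterm]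
    exact (summable_pow_div_Gamma hα α x).mul_left _
  have hr : r ∈ Metric.ball (0 : ℝ) (|r| + 1) := by simp
  have key := hasDerivAt_tsum_of_isPreconnected (hderiv (|r| + 1)) Metric.isOpen_ball
    (convex_ball (0 : ℝ) (|r| + 1)).isPreconnected
    (fun k y _ => (hasDerivAt_pow k y).div_const (Gamma (1 + k * α)))
    (fun k y hy => ?_) hr (summable_pow_div_Gamma hα 1 r) hr
  · rw [(hderiv r).tsum_eq_zero_add] at key
    simp only [Nat.add_sub_cancel, hterm, tsum_mul_left, Nat.cast_zero, zero_mul, zero_div,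
      zero_add] at key
    exact key
  · have hpos : 0 < Gamma (1 + k * α) := Gamma_pos_of_pos (by positivity)
    have hy' : |y| ≤ |r| + 1 := by simpa using (mem_ball_zero_iff.1 hy).le
    rw [norm_div, norm_mul, norm_pow, norm_eq_abs, norm_eq_abs, norm_eq_abs, abs_of_pos hpos,
      Nat.abs_cast]
    gcongr
end

section
/- Let 0 < α ≤ 1. Then for every real r one has E_α(r) > 0 and E_{α,α}(r) > 0. -/
open Real

open Filter Topology

/-- The product `∏_{i=1}^n (1 + β / i)`, which grows like `n ^ β / Γ(1 + β)`. -/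
noncomputable def eulerProd (n : ℕ) (β : ℝ) : ℝ :=
  ∏ i ∈ Finset.range n, (1 + β / (i + 1))

lemma eulerProd_nonneg (n : ℕ) {β : ℝ} (hβ : 0 ≤ β) : 0 ≤ eulerProd n β :=
  Finset.prod_nonneg fun i _ => by positivity

lemma eulerProd_succ (n : ℕ) (β : ℝ) :
    eulerProd (n + 1) β = eulerProd n β * (1 + β / (n + 1)) := by
  simp [eulerProd, Finset.prod_range_succ]

lemma tendsto_eulerProd_div_rpow {β : ℝ} (hβ : 0 ≤ β) :
    Tendsto (fun n : ℕ => eulerProd n β / (n : ℝ) ^ β) atTop (𝓝 (1 / Gamma (1 + β))) := by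
  rcases hβ.eq_or_lt with rfl | hpos
  · simp [eulerProd]
  have hprod (n : ℕ) : ∏ j ∈ Finset.range (n + 1), (β + j) = β * n.factorial * eulerProd n β := by
    induction n with
    | zero => simp [eulerProd]
    | succ n ih =>
      rw [Finset.prod_range_succ, ih, eulerProd_succ, Nat.factorial_succ]
      push_cast
      field_simp
      ring
  have hlim := ((GammaSeq_tendsto_Gamma β).const_mul β).inv₀
    (mul_pos hpos (Gamma_pos_of_pos hpos)).ne'
  rw [add_comm, Gamma_add_one hpos.ne', one_div]
  refine hlim.congr fun n => ?_
  rw [GammaSeq, hprod]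
  have : (n.factorial : ℝ) ≠ 0 := by positivity
  field_simp

lemma eulerProd_le {M n : ℕ} (hM : 1 ≤ M) (hn : M ≤ n) {β : ℝ} (hβ : 0 ≤ β) :
    eulerProd n β ≤ (1 + β) ^ M * ((n : ℝ) / M) ^ β := by
  have hM0 : (0 : ℝ) < M := by exact_mod_cast hM
  induction n, hn using Nat.le_induction with
  | base =>
    rw [div_self hM0.ne', one_rpow, mul_one, eulerProd]
    calc _ ≤ ∏ _i ∈ Finset.range M, (1 + β) := by
          refine Finset.prod_le_prod (fun i _ => by positivity) fun i _ => ?_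
          gcongr
          exact div_le_self hβ (by linarith [i.cast_nonneg (α := ℝ)])
      _ = _ := by simp
  | succ n hn ih =>
    have hn0 : (0 : ℝ) < n := hM0.trans_le (by exact_mod_cast hn)
    have hfactor : 1 + β / (n + 1) ≤ (((n : ℝ) + 1) / n) ^ β := by
      rw [rpow_def_of_pos (by positivity)]
      have hlog := one_sub_inv_le_log_of_pos (x := ((n : ℝ) + 1) / n) (by positivity)
      have hinv : 1 - (((n : ℝ) + 1) / n)⁻¹ = 1 / (n + 1) := by field_simp; ring
      rw [hinv] at hlog
      have hexp := add_one_le_exp (log (((n : ℝ) + 1) / n) * β)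
      have : β / (n + 1) = 1 / ((n : ℝ) + 1) * β := by ring
      nlinarith
    rw [eulerProd_succ]
    calc _ ≤ ((1 + β) ^ M * ((n : ℝ) / M) ^ β) * (((n : ℝ) + 1) / n) ^ β := by gcongr
      _ = _ := by
        rw [mul_assoc, ← mul_rpow (by positivity) (by positivity)]
        push_cast
        congr 2
        field_simp

/-- `a` is a nonnegative combination of the coefficient sequences of `(1 - x)⁻¹ ^ (k + 1)`. -/
def IsNonnegChooseComb (a : ℕ → ℝ) : Prop :=
  ∃ (N : ℕ) (p : ℕ → ℝ), (∀ k, 0 ≤ p k) ∧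
    ∀ j, a j = ∑ k ∈ Finset.range N, p k * ((j + k).choose k : ℝ)

namespace IsNonnegChooseComb

lemma sq_le_tsum_mul_tsum {a : ℕ → ℝ} (ha : IsNonnegChooseComb a) {x : ℝ} (hx : |x| < 1) :
    a 0 ^ 2 ≤ (∑' j, x ^ j * a j) * ∑' j, (-x) ^ j * a j := by
  obtain ⟨N, p, hp, hap⟩ := ha
  have hsum {y : ℝ} (hy : |y| < 1) :
      ∑' j, y ^ j * a j = ∑ k ∈ Finset.range N, p k * (1 / (1 - y) ^ (k + 1)) := by
    refine HasSum.tsum_eq ?_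
    have h := hasSum_sum (s := Finset.range N) fun k _ =>
      (hasSum_choose_mul_geometric_of_norm_lt_one k (r := y) (by simpa using hy)).mul_left (p k)
    refine h.congr_fun ?_
    intro j
    rw [hap, Finset.mul_sum]
    exact Finset.sum_congr rfl fun k _ => by ring
  rw [hsum hx, hsum (by simpa using hx), hap]
  obtain ⟨h1, h2⟩ := abs_lt.mp hx
  have hm : 0 < 1 - x := by linarith
  have hq : 0 < 1 - -x := by linarith
  refine Finset.sum_sq_le_sum_mul_sum_of_sq_le_mul _ (fun k _ => ?_) (fun k _ => ?_) fun k _ => ?_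
  · have := hp k
    positivity
  · have := hp k
    positivity
  · have hle : ((1 - x) * (1 - -x)) ^ (k + 1) ≤ 1 :=
      pow_le_one₀ (by positivity) (by nlinarith [sq_nonneg x])
    have hone : 1 ≤ 1 / ((1 - x) * (1 - -x)) ^ (k + 1) :=
      (one_le_div (by positivity)).mpr hle
    calc _ = p k ^ 2 * 1 := by simp
      _ ≤ p k ^ 2 * (1 / ((1 - x) * (1 - -x)) ^ (k + 1)) := by gcongr
      _ = _ := by rw [mul_pow]; field_simp

end IsNonnegChooseComb

lemma cast_mul_choose_add (j k : ℕ) :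
    (j : ℝ) * (j + k).choose k =
      (k + 1) * ((j + (k + 1)).choose (k + 1) - (j + k).choose k) := by
  have h := Nat.add_one_mul_choose_eq (j + k) k
  have h' : ((j : ℝ) + k + 1) * (j + k).choose k = (j + (k + 1)).choose (k + 1) * (k + 1) := by
    exact_mod_cast h
  linarith

lemma exists_eulerProd_eq_sum {α : ℝ} (hα : 0 ≤ α) (hα1 : α ≤ 1) (n : ℕ) :
    ∃ p : ℕ → ℝ, (∀ k, 0 ≤ p k) ∧
      ∀ j : ℕ, eulerProd n (α * j) =
        ∑ k ∈ Finset.range (n + 1), p k * ((j + k).choose k : ℝ) := by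
  induction n with
  | zero => exact ⟨fun _ => 1, fun _ => zero_le_one, fun j => by simp [eulerProd]⟩
  | succ n ih =>
    obtain ⟨p, hp, hpj⟩ := ih
    refine ⟨fun k => (if k < n + 1 then p k * (1 - α * (k + 1) / (n + 1)) else 0) +
      (if k = 0 then 0 else p (k - 1) * (α * k / (n + 1))), fun k => ?_, fun j => ?_⟩
    · refine add_nonneg ?_ ?_
      · split_ifs with hk
        · refine mul_nonneg (hp k) (sub_nonneg.mpr ((div_le_one (by positivity)).mpr ?_))
          have : (k : ℝ) + 1 ≤ n + 1 := by exact_mod_cast hk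
          nlinarith
        · exact le_rfl
      · have := hp (k - 1)
        split_ifs <;> positivity
    · rw [eulerProd_succ, hpj, Finset.sum_mul]
      simp only [add_mul _ _ (Nat.cast _ : ℝ)]
      rw [Finset.sum_add_distrib, Finset.sum_range_succ (n := n + 1),
        Finset.sum_range_succ' (n := n + 1)]
      simp only [lt_self_iff_false, if_false, if_true, zero_mul, add_zero, Nat.succ_ne_zero,
        Nat.add_sub_cancel]
      rw [← Finset.sum_add_distrib]
      refine Finset.sum_congr rfl fun k hk => ?_
      rw [if_pos (Finset.mem_range.mp hk)]
      have h := cast_mul_choose_add j k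
      push_cast
      linear_combination (p k * α / (n + 1)) * h

lemma isNonnegChooseComb_eulerProd {α : ℝ} (hα : 0 ≤ α) (hα1 : α ≤ 1) (n : ℕ) :
    IsNonnegChooseComb fun j => eulerProd n (α * j) :=
  let ⟨p, hp, hpj⟩ := exists_eulerProd_eq_sum hα hα1 n
  ⟨n + 1, p, hp, hpj⟩

lemma isNonnegChooseComb_succ_mul_eulerProd {α : ℝ} (hα : 0 ≤ α) (hα1 : α ≤ 1) (n : ℕ) :
    IsNonnegChooseComb fun j => ((j : ℝ) + 1) * eulerProd n (α * (j + 1)) := by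
  obtain ⟨p, hp, hpj⟩ := exists_eulerProd_eq_sum hα hα1 n
  refine ⟨n + 2, fun k => if k = 0 then 0 else p (k - 1) * k, fun k => ?_, fun j => ?_⟩
  · have := hp (k - 1)
    dsimp only
    split_ifs <;> positivity
  · have h := hpj (j + 1)
    push_cast at h
    dsimp only
    rw [h, Finset.sum_range_succ' (n := n + 1), Finset.mul_sum]
    simp only [if_true, zero_mul, add_zero, Nat.succ_ne_zero, if_false, Nat.add_sub_cancel]
    refine Finset.sum_congr rfl fun k _ => ?_
    have hc := cast_mul_choose_add (j + 1) k
    have hpascal : (j + 1 + (k + 1)).choose (k + 1) =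
        (j + 1 + k).choose k + (j + (k + 1)).choose (k + 1) := by
      rw [show j + 1 + (k + 1) = (j + 1 + k) + 1 by ring, Nat.choose_succ_succ,
        show j + 1 + k = j + (k + 1) by ring]
    rw [hpascal] at hc
    push_cast at hc ⊢
    linear_combination p k * hc

/-- Passage to the limit under the sum, by dominated convergence. -/
lemma tendsto_tsum_eulerProd {α : ℝ} (hα : 0 < α) (hα1 : α ≤ 1) {e : ℕ} (he : e ≤ 1) (r : ℝ) :
    Tendsto
      (fun n : ℕ => ∑' j : ℕ, r ^ j * (((j : ℝ) + 1) ^ e *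
        (eulerProd n (α * (j + e)) / (n : ℝ) ^ (α * (j + e)))))
      atTop (𝓝 (∑' j : ℕ, r ^ j * (((j : ℝ) + 1) ^ e * (1 / Gamma (1 + α * (j + e)))))) := by
  obtain ⟨M, hMr, hM⟩ : ∃ M : ℕ, |r| + 1 < (M : ℝ) ^ α ∧ 1 ≤ M :=
    ((((tendsto_rpow_atTop hα).comp tendsto_natCast_atTop_atTop).eventually_gt_atTop _).and
      (eventually_ge_atTop 1)).exists
  have hM1 : (1 : ℝ) ≤ M := by exact_mod_cast hM
  have hMα : 0 < (M : ℝ) ^ α := by positivity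
  set q := (|r| + 1) / (M : ℝ) ^ α with hq
  have hq0 : 0 < q := by positivity
  have hq1 : q < 1 := (div_lt_one hMα).mpr hMr
  have hbound : Summable fun j : ℕ => ((j : ℝ) + 2) ^ (M + 1) * q ^ j := by
    have h := (summable_nat_add_iff 2).mpr
      (summable_pow_mul_geometric_of_norm_lt_one (M + 1) (r := q)
        (by rwa [norm_eq_abs, abs_of_pos hq0]))
    refine (h.mul_left (q ^ 2)⁻¹).congr fun j => ?_
    push_cast
    field_simp
    ring
  refine tendsto_tsum_of_dominated_convergence hbound (fun j => ?_) ?_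
  · exact ((tendsto_eulerProd_div_rpow (by positivity)).const_mul _).const_mul _
  filter_upwards [eventually_ge_atTop M] with n hn j
  have hn0 : (0 : ℝ) < n := by exact_mod_cast hM.trans hn
  have hβ : 0 ≤ α * (j + e) := by positivity
  have he' : (e : ℝ) ≤ 1 := by exact_mod_cast he
  have hratio : eulerProd n (α * (j + e)) / (n : ℝ) ^ (α * (j + e)) ≤
      (j + 2) ^ M * (((M : ℝ) ^ α) ^ j)⁻¹ := by
    rw [div_le_iff₀ (by positivity)]
    refine (eulerProd_le hM hn hβ).trans ?_
    rw [div_rpow hn0.le (by positivity), div_eq_mul_inv, mul_comm (_ ^ _) (_⁻¹), ← mul_assoc]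
    have hbase : 1 + α * (j + e) ≤ j + 2 := by nlinarith [j.cast_nonneg (α := ℝ)]
    have hpow : ((M : ℝ) ^ α) ^ j ≤ (M : ℝ) ^ (α * (j + e)) := by
      rw [← rpow_natCast, ← rpow_mul (by positivity)]
      exact rpow_le_rpow_of_exponent_le hM1 (by gcongr; simp)
    gcongr
  have hnonneg : 0 ≤ eulerProd n (α * (j + e)) / (n : ℝ) ^ (α * (j + e)) :=
    div_nonneg (eulerProd_nonneg n hβ) (by positivity)
  have hw : ((j : ℝ) + 1) ^ e ≤ j + 2 :=
    (pow_le_pow_right₀ (by linarith [j.cast_nonneg (α := ℝ)]) he).trans (by linarith)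
  rw [norm_mul, norm_pow, norm_eq_abs, norm_eq_abs,
    abs_of_nonneg (mul_nonneg (by positivity) hnonneg)]
  calc _ ≤ (|r| + 1) ^ j * ((j + 2) * ((j + 2) ^ M * (((M : ℝ) ^ α) ^ j)⁻¹)) := by
        gcongr
        linarith
    _ = _ := by rw [hq, div_pow]; ring

lemma tsum_pos_of_isNonnegChooseComb {α : ℝ} (hα : 0 < α) (hα1 : α ≤ 1) {e : ℕ} (he : e ≤ 1)
    (hcomb : ∀ n, IsNonnegChooseComb fun j => ((j : ℝ) + 1) ^ e * eulerProd n (α * (j + e)))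
    (r : ℝ) :
    0 < ∑' j : ℕ, r ^ j * (((j : ℝ) + 1) ^ e * (1 / Gamma (1 + α * (j + e)))) := by
  set S : ℝ → ℝ := fun r =>
    ∑' j : ℕ, r ^ j * (((j : ℝ) + 1) ^ e * (1 / Gamma (1 + α * (j + e))))
  have hnonneg {t : ℝ} (ht : 0 ≤ t) : 0 ≤ S t :=
    tsum_nonneg fun j => by
      have := Gamma_pos_of_pos (s := 1 + α * (j + e)) (by positivity)
      positivity
  have hprod : (1 / Gamma (1 + α * e)) ^ 2 ≤ S r * S (-r) := by
    refine le_of_tendsto_of_tendsto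
      ((tendsto_eulerProd_div_rpow (β := α * e) (by positivity)).pow 2)
      ((tendsto_tsum_eulerProd hα hα1 he r).mul (tendsto_tsum_eulerProd hα hα1 he (-r))) ?_
    filter_upwards [((tendsto_rpow_atTop hα).comp
      tendsto_natCast_atTop_atTop).eventually_gt_atTop |r|, eventually_ge_atTop 1] with n hnr hn
    have hn0 : (0 : ℝ) < n := by exact_mod_cast hn
    have hnα : 0 < (n : ℝ) ^ α := by positivity
    have hx : |r / (n : ℝ) ^ α| < 1 := by
      rw [abs_div, abs_of_pos hnα]
      exact (div_lt_one hnα).mpr hnr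
    have hscale (t : ℝ) : ∑' j : ℕ, t ^ j * (((j : ℝ) + 1) ^ e *
        (eulerProd n (α * (j + e)) / (n : ℝ) ^ (α * (j + e)))) =
        ((n : ℝ) ^ (α * e))⁻¹ * ∑' j : ℕ, (t / (n : ℝ) ^ α) ^ j *
          (((j : ℝ) + 1) ^ e * eulerProd n (α * (j + e))) := by
      rw [← tsum_mul_left]
      refine tsum_congr fun j => ?_
      rw [mul_add, rpow_add hn0, rpow_mul hn0.le α j, rpow_natCast, div_pow]
      field_simp
    have h := (hcomb n).sq_le_tsum_mul_tsum hx
    simp only [Nat.cast_zero, zero_add, one_pow, one_mul] at h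
    rw [hscale, hscale, neg_div]
    calc _ = ((n : ℝ) ^ (α * e))⁻¹ ^ 2 * eulerProd n (α * e) ^ 2 := by
          rw [div_eq_mul_inv]; ring
      _ ≤ ((n : ℝ) ^ (α * e))⁻¹ ^ 2 * _ := mul_le_mul_of_nonneg_left h (by positivity)
      _ = _ := by ring
  have hΓ := Gamma_pos_of_pos (s := 1 + α * e) (by positivity)
  have hpos : 0 < S r * S (-r) := lt_of_lt_of_le (by positivity) hprod
  rcases le_total 0 r with hr | hr
  · exact (hnonneg hr).lt_of_ne fun h => by simp [← h] at hpos
  · exact pos_of_mul_pos_left hpos (hnonneg (neg_nonneg.mpr hr))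

theorem mittagLeffler_pos (α : ℝ) (hα : 0 < α) (hα1 : α ≤ 1) (r : ℝ) :
    0 < mittagLeffler α r ∧ 0 < mittagLefflerAA α r := by
  constructor
  · have h := tsum_pos_of_isNonnegChooseComb hα hα1 (e := 0) zero_le_one
      (fun n => by simpa using isNonnegChooseComb_eulerProd hα.le hα1 n) r
    refine h.trans_eq (tsum_congr fun k => ?_)
    rw [mul_comm α]
    simp [div_eq_mul_inv]
  · have h := tsum_pos_of_isNonnegChooseComb hα hα1 (e := 1) le_rfl
      (fun n => by simpa using isNonnegChooseComb_succ_mul_eulerProd hα.le hα1 n) r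
    refine (mul_pos hα h).trans_eq ?_
    rw [← tsum_mul_left]
    refine tsum_congr fun k => ?_
    have hΓ := Gamma_pos_of_pos (s := α * (k + 1)) (by positivity)
    rw [Nat.cast_one, add_comm 1 (α * _), Gamma_add_one (by positivity),
      show α + k * α = α * (k + 1) by ring]
    field_simp
end

section
/- Let 0 < α < 1. Then, as r → +∞, E_α(r) − (1/α)·exp(r^{1/α}) = O(1/r); that is, there exist constants C > 0 and R > 0 such that |E_α(r) − (1/α)·exp(r^{1/α})| ≤ C/r for all r ≥ R. -/
open Real

open MeasureTheory Filter Topology Set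

/-- The difference of the values of `Φ` on the lines `Im w = π` and `Im w = -π`. -/
noncomputable def rayJump (Φ : ℂ → ℂ) (y : ℝ) : ℂ :=
  Φ (y + (π : ℝ) * Complex.I) - Φ (y + (-π : ℝ) * Complex.I)

/-- The integral of `Φ` along the boundary of the half-strip `L < Re w`, `|Im w| < π`. This is a
Hankel contour in the logarithmic variable `w`. -/
noncomputable def hankelIntegral (L : ℝ) (Φ : ℂ → ℂ) : ℂ :=
  (∫ y in Ioi L, rayJump Φ y) + Complex.I * ∫ θ in (-π)..π, Φ (L + θ * Complex.I)

/-- Shifting the vertical side of the Hankel contour to `-∞`. -/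
lemma hankelIntegral_eq_integral_rayJump {Φ : ℂ → ℂ} (L : ℝ) {b : ℝ → ℝ}
    (hd : DifferentiableOn ℂ Φ {w | |w.im| ≤ π}) (hint : Integrable (rayJump Φ))
    (hb : Tendsto b atBot (𝓝 0))
    (hleft : ∀ᶠ x : ℝ in atBot, ∀ θ : ℝ, |θ| ≤ π → ‖Φ (x + θ * Complex.I)‖ ≤ b x) :
    hankelIntegral L Φ = ∫ y, rayJump Φ y := by
  have hmem : ∀ (y θ : ℝ), |θ| ≤ π → ((y : ℂ) + θ * Complex.I) ∈ {w : ℂ | |w.im| ≤ π} := by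
    intro y θ h
    simpa using h
  have hline : ∀ θ : ℝ, |θ| ≤ π → Continuous fun y : ℝ => Φ (y + θ * Complex.I) := by
    intro θ h
    exact hd.continuousOn.comp_continuous (by fun_prop) fun y => hmem y θ h
  have hπ : |π| ≤ π := (abs_of_pos pi_pos).le
  have hπ' : |-π| ≤ π := by rwa [abs_neg]
  have hrect : ∀ x : ℝ, Complex.I * ∫ θ in (-π)..π, Φ (L + θ * Complex.I) =
      (∫ y in x..L, rayJump Φ y) + Complex.I * ∫ θ in (-π)..π, Φ (x + θ * Complex.I) := by
    intro x
    have h := Complex.integral_boundary_rect_eq_zero_of_differentiableOn Φ ⟨x, -π⟩ ⟨L, π⟩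
      (hd.mono fun w hw => by
        have h2 := (Complex.mem_reProdIm.1 hw).2
        rw [uIcc_of_le (by linarith [pi_pos])] at h2
        exact abs_le.2 h2)
    simp only [smul_eq_mul] at h
    unfold rayJump
    rw [intervalIntegral.integral_sub ((hline π hπ).intervalIntegrable _ _)
      ((hline (-π) hπ').intervalIntegrable _ _)]
    linear_combination h
  have hlim0 : Tendsto (fun x : ℝ => ∫ θ in (-π)..π, Φ (x + θ * Complex.I)) atBot (𝓝 0) := by
    refine squeeze_zero_norm' (a := fun x => b x * |π - -π|) ?_ (by simpa using hb.mul_const _)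
    filter_upwards [hleft] with x hx
    refine intervalIntegral.norm_integral_le_of_norm_le_const fun θ hθ => hx θ ?_
    rw [uIoc_of_le (by linarith [pi_pos])] at hθ
    exact abs_le.2 ⟨hθ.1.le, hθ.2⟩
  have hlim := (intervalIntegral_tendsto_integral_Iic L hint.integrableOn tendsto_id).add
    (hlim0.const_mul Complex.I)
  have hvert := tendsto_nhds_unique (tendsto_const_nhds.congr hrect) hlim
  rw [hankelIntegral, hvert, mul_zero, add_zero, add_comm,
    intervalIntegral.integral_Iic_add_Ioi hint.integrableOn hint.integrableOn]

/-- The integrand `exp (exp w) * exp (-a w)` of Hankel's formula in the logarithmic variable. -/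
noncomputable def hankelKernel (a : ℝ) (w : ℂ) : ℂ :=
  Complex.exp (Complex.exp w - a * w)

lemma differentiable_hankelKernel (a : ℝ) : Differentiable ℂ (hankelKernel a) := by
  unfold hankelKernel
  fun_prop

lemma exp_add_pi_mul_I (y : ℝ) : Complex.exp (y + (π : ℝ) * Complex.I) = -(Real.exp y : ℝ) := by
  rw [Complex.exp_add, Complex.exp_pi_mul_I]
  simp

lemma exp_add_neg_pi_mul_I (y : ℝ) :
    Complex.exp (y + (-π : ℝ) * Complex.I) = -(Real.exp y : ℝ) := by
  rw [Complex.exp_add, Complex.ofReal_neg, neg_mul, Complex.exp_neg, Complex.exp_pi_mul_I]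
  norm_num

lemma rayJump_hankelKernel (a y : ℝ) :
    rayJump (hankelKernel a) y =
      (Real.exp (-Real.exp y - a * y) : ℝ) * (-2 * Complex.I * (Real.sin (π * a) : ℝ)) := by
  unfold rayJump hankelKernel
  rw [exp_add_pi_mul_I, exp_add_neg_pi_mul_I]
  have h1 : -((Real.exp y : ℝ) : ℂ) - a * (y + (π : ℝ) * Complex.I) =
      ((-Real.exp y - a * y : ℝ) : ℂ) + (-(π * a : ℝ) : ℂ) * Complex.I := by
    push_cast
    ring
  have h2 : -((Real.exp y : ℝ) : ℂ) - a * (y + (-π : ℝ) * Complex.I) =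
      ((-Real.exp y - a * y : ℝ) : ℂ) + ((π * a : ℝ) : ℂ) * Complex.I := by
    push_cast
    ring
  rw [h1, h2, Complex.exp_add, Complex.exp_add, Complex.exp_mul_I, Complex.exp_mul_I,
    Complex.cos_neg, Complex.sin_neg, Complex.ofReal_exp, Complex.ofReal_sin]
  ring

lemma norm_hankelKernel (a : ℝ) (w : ℂ) :
    ‖hankelKernel a w‖ = Real.exp ((Complex.exp w).re - a * w.re) := by
  simp [hankelKernel, Complex.norm_exp]

lemma exp_mul_gamma_integrand_comp_exp (s y : ℝ) :
    |Real.exp y| • (Real.exp (-Real.exp y) * Real.exp y ^ (s - 1)) =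
      Real.exp (-Real.exp y + s * y) := by
  rw [abs_of_pos (Real.exp_pos y), smul_eq_mul, ← Real.exp_mul, ← Real.exp_add, ← Real.exp_add]
  ring_nf

lemma integrable_exp_neg_exp_add_mul {s : ℝ} (hs : 0 < s) :
    Integrable fun y : ℝ => Real.exp (-Real.exp y + s * y) := by
  have h := (integrableOn_image_iff_integrableOn_abs_deriv_smul MeasurableSet.univ
    (fun y _ => (Real.hasDerivAt_exp y).hasDerivWithinAt) Real.exp_injective.injOn
    fun x => Real.exp (-x) * x ^ (s - 1)).1
    (by rw [image_univ, Real.range_exp]; exact Real.GammaIntegral_convergent hs)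
  simpa only [integrableOn_univ, exp_mul_gamma_integrand_comp_exp] using h

/-- The Gamma integral in the logarithmic variable. -/
lemma integral_exp_neg_exp_add_mul {s : ℝ} (hs : 0 < s) :
    ∫ y : ℝ, Real.exp (-Real.exp y + s * y) = Real.Gamma s := by
  have h := integral_image_eq_integral_abs_deriv_smul MeasurableSet.univ
    (fun y _ => (Real.hasDerivAt_exp y).hasDerivWithinAt) Real.exp_injective.injOn
    fun x => Real.exp (-x) * x ^ (s - 1)
  simp only [image_univ, Real.range_exp, setIntegral_univ, exp_mul_gamma_integrand_comp_exp] at h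
  rw [← h, Real.Gamma_eq_integral hs]

lemma integrableOn_exp_neg_exp_sub_mul (a L : ℝ) :
    IntegrableOn (fun y : ℝ => Real.exp (-Real.exp y - a * y)) (Ioi L) := by
  have hs : 0 < |a| + 1 := by positivity
  refine (((integrable_exp_neg_exp_add_mul hs).const_mul
    (Real.exp (-(a + (|a| + 1)) * L))).integrableOn (s := Ioi L)).mono'
    (Continuous.aestronglyMeasurable (by fun_prop)) ?_
  refine ae_restrict_of_forall_mem measurableSet_Ioi fun y hy => ?_
  rw [Real.norm_eq_abs, Real.abs_exp, ← Real.exp_add, Real.exp_le_exp]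
  have h : 0 ≤ a + (|a| + 1) := by linarith [neg_abs_le a]
  nlinarith [mul_le_mul_of_nonneg_left (le_of_lt (mem_Ioi.1 hy)) h]

lemma tendsto_exp_neg_exp_sub_mul (a : ℝ) :
    Tendsto (fun y : ℝ => Real.exp (-Real.exp y - a * y)) atTop (𝓝 0) := by
  have h := (Real.tendsto_pow_mul_exp_neg_atTop_nhds_zero ⌈|a|⌉₊).comp Real.tendsto_exp_atTop
  refine squeeze_zero' (Eventually.of_forall fun y => (Real.exp_pos _).le) ?_ h
  filter_upwards [eventually_ge_atTop 0] with y hy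
  rw [Function.comp_apply, ← Real.exp_nat_mul, ← Real.exp_add, Real.exp_le_exp]
  have := Nat.le_ceil |a|
  nlinarith [neg_abs_le a]

lemma rayJump_const_mul (c : ℂ) (Φ : ℂ → ℂ) (y : ℝ) :
    rayJump (fun w => c * Φ w) y = c * rayJump Φ y := by
  simp only [rayJump, mul_sub]

lemma hankelIntegral_const_mul (L : ℝ) (c : ℂ) (Φ : ℂ → ℂ) :
    hankelIntegral L (fun w => c * Φ w) = c * hankelIntegral L Φ := by
  simp only [hankelIntegral, rayJump_const_mul, integral_const_mul,
    intervalIntegral.integral_const_mul]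
  ring

lemma integrableOn_rayJump_hankelKernel (a L : ℝ) :
    IntegrableOn (rayJump (hankelKernel a)) (Ioi L) := by
  rw [funext (rayJump_hankelKernel a)]
  exact (integrableOn_exp_neg_exp_sub_mul a L).ofReal.mul_const _

lemma hasDerivAt_hankelKernel (a : ℝ) (w : ℂ) :
    HasDerivAt (hankelKernel a) (hankelKernel (a - 1) w - a * hankelKernel a w) w := by
  have h := ((Complex.hasDerivAt_exp w).sub ((hasDerivAt_id w).const_mul (a : ℂ))).cexp
  refine h.congr_deriv ?_
  simp only [hankelKernel, id]
  rw [show Complex.exp w - ((a - 1 : ℝ) : ℂ) * w = (Complex.exp w - a * w) + w by push_cast; ring,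
    Complex.exp_add]
  simp only [Pi.sub_apply]
  ring

lemma tendsto_rayJump_hankelKernel (a : ℝ) :
    Tendsto (rayJump (hankelKernel a)) atTop (𝓝 0) := by
  rw [funext (rayJump_hankelKernel a)]
  have h := (Complex.continuous_ofReal.tendsto 0).comp (tendsto_exp_neg_exp_sub_mul a)
  simpa [Function.comp_def] using h.mul_const (-2 * Complex.I * (Real.sin (π * a) : ℝ))

lemma hankelIntegral_hankelKernel_sub_one (L a : ℝ) :
    hankelIntegral L (hankelKernel (a - 1)) = a * hankelIntegral L (hankelKernel a) := by
  have hray : ∀ y : ℝ, HasDerivAt (rayJump (hankelKernel a))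
      (rayJump (hankelKernel (a - 1)) y - a * rayJump (hankelKernel a) y) y := by
    intro y
    have h : ∀ θ : ℝ, HasDerivAt (fun y : ℝ => hankelKernel a (y + θ * Complex.I))
        (hankelKernel (a - 1) (y + θ * Complex.I) - a * hankelKernel a (y + θ * Complex.I)) y := by
      intro θ
      have h1 : HasDerivAt (fun y : ℝ => (y : ℂ) + θ * Complex.I) 1 y :=
        Complex.ofRealCLM.hasDerivAt.add_const _
      exact ((hasDerivAt_hankelKernel a _).comp y h1).congr_deriv (mul_one _)
    refine ((h π).sub (h (-π))).congr_deriv ?_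
    simp only [rayJump]
    ring
  have hvert : ∀ θ : ℝ, HasDerivAt (fun θ : ℝ => hankelKernel a (L + θ * Complex.I))
      (Complex.I * hankelKernel (a - 1) (L + θ * Complex.I) -
        Complex.I * (a * hankelKernel a (L + θ * Complex.I))) θ := by
    intro θ
    have h1 : HasDerivAt (fun θ : ℝ => (L : ℂ) + θ * Complex.I) Complex.I θ := by
      simpa using (Complex.ofRealCLM.hasDerivAt.mul_const Complex.I).const_add (L : ℂ)
    refine ((hasDerivAt_hankelKernel a _).comp θ h1).congr_deriv ?_
    ring
  have hc : ∀ b : ℝ, Continuous fun θ : ℝ => hankelKernel b (L + θ * Complex.I) := fun b =>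
    (differentiable_hankelKernel b).continuous.comp (by fun_prop)
  have hi := integrableOn_rayJump_hankelKernel (a - 1) L
  have hi' := (integrableOn_rayJump_hankelKernel a L).const_mul (a : ℂ)
  have e1 := integral_Ioi_of_hasDerivAt_of_tendsto (hray L).continuousAt.continuousWithinAt
    (fun y _ => hray y) (hi.sub hi') (tendsto_rayJump_hankelKernel a)
  have e2 := intervalIntegral.integral_eq_sub_of_hasDerivAt (a := -π) (b := π)
    (fun θ _ => hvert θ) (Continuous.intervalIntegrable
      (((hc (a - 1)).const_mul _).sub (((hc a).const_mul _).const_mul _)) _ _)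
  rw [integral_sub hi hi', integral_const_mul] at e1
  rw [intervalIntegral.integral_sub (((hc (a - 1)).const_mul _).intervalIntegrable _ _)
    ((((hc a).const_mul _).const_mul _).intervalIntegrable _ _),
    intervalIntegral.integral_const_mul, intervalIntegral.integral_const_mul,
    intervalIntegral.integral_const_mul] at e2
  simp only [hankelIntegral]
  simp only [rayJump] at e1 ⊢
  linear_combination e1 + e2

lemma tendsto_exp_exp_atBot : Tendsto (fun x : ℝ => Real.exp (Real.exp x)) atBot (𝓝 1) := by
  simpa [Function.comp_def] using (Real.continuous_exp.tendsto 0).comp Real.tendsto_exp_atBot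

lemma re_exp_le_exp_re (w : ℂ) : (Complex.exp w).re ≤ Real.exp w.re :=
  (Complex.re_le_norm _).trans (Complex.norm_exp w).le

lemma norm_hankelKernel_le (a x θ : ℝ) :
    ‖hankelKernel a (x + θ * Complex.I)‖ ≤ Real.exp (Real.exp x) * Real.exp (-a * x) := by
  rw [norm_hankelKernel, ← Real.exp_add, Real.exp_le_exp]
  have h := re_exp_le_exp_re (x + θ * Complex.I)
  have hre : ((x : ℂ) + θ * Complex.I).re = x := by simp
  rw [hre] at h ⊢
  linarith

lemma hankelIntegral_hankelKernel_of_neg (L : ℝ) {a : ℝ} (ha : a < 0) :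
    hankelIntegral L (hankelKernel a) = 2 * π * Complex.I / (Real.Gamma (1 + a) : ℝ) := by
  have hb : Tendsto (fun x : ℝ => Real.exp (Real.exp x) * Real.exp (-a * x)) atBot (𝓝 0) := by
    have h2 : Tendsto (fun x : ℝ => Real.exp (-a * x)) atBot (𝓝 0) :=
      Real.tendsto_exp_atBot.comp (tendsto_id.const_mul_atBot (neg_pos.2 ha))
    simpa [sub_eq_add_neg] using tendsto_exp_exp_atBot.mul h2
  have hexp : ∀ y : ℝ, Real.exp (-Real.exp y - a * y) = Real.exp (-Real.exp y + -a * y) := by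
    intro y
    ring_nf
  have hjump := funext (rayJump_hankelKernel a)
  simp only [hexp] at hjump
  rw [hankelIntegral_eq_integral_rayJump L (differentiable_hankelKernel a).differentiableOn
    (by rw [hjump]; exact (integrable_exp_neg_exp_add_mul (neg_pos.2 ha)).ofReal.mul_const _) hb
    (Eventually.of_forall fun x θ _ => norm_hankelKernel_le a x θ), hjump, integral_mul_const,
    integral_complex_ofReal, integral_exp_neg_exp_add_mul (neg_pos.2 ha)]
  have hrefl := Real.Gamma_mul_Gamma_one_sub (-a)
  rw [sub_neg_eq_add, mul_neg, Real.sin_neg] at hrefl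
  have hΓ : Real.Gamma (-a) ≠ 0 := (Real.Gamma_pos_of_pos (neg_pos.2 ha)).ne'
  have key : Real.Gamma (-a) * Real.sin (π * a) = -π / Real.Gamma (1 + a) := by
    by_cases hsin : Real.sin (π * a) = 0
    · have h0 : Real.Gamma (1 + a) = 0 := by simpa [hsin, hΓ] using hrefl
      simp [hsin, h0]
    · have h0 : Real.Gamma (1 + a) ≠ 0 := by
        intro h0
        rw [h0, mul_zero, eq_comm, div_eq_zero_iff] at hrefl
        exact hrefl.elim pi_ne_zero (neg_ne_zero.2 hsin)
      rw [eq_div_iff h0]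
      linear_combination -(eq_div_iff (neg_ne_zero.2 hsin)).1 hrefl
  have key' : ((Real.Gamma (-a) : ℝ) : ℂ) * (Real.sin (π * a) : ℝ) =
      -π / (Real.Gamma (1 + a) : ℝ) := by
    exact_mod_cast key
  linear_combination (-2 * Complex.I) * key'

lemma hankelIntegral_hankelKernel_zero (L : ℝ) :
    hankelIntegral L (hankelKernel 0) = 2 * π * Complex.I := by
  have hjump : rayJump (fun w => hankelKernel 0 w - 1) = fun _ => 0 := by
    funext y
    have h := rayJump_hankelKernel 0 y
    rw [mul_zero, Real.sin_zero, Complex.ofReal_zero, mul_zero, mul_zero] at h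
    rw [← h]
    simp [rayJump]
  have hb : Tendsto (fun x : ℝ => Real.exp x * Real.exp (Real.exp x)) atBot (𝓝 0) := by
    simpa using Real.tendsto_exp_atBot.mul tendsto_exp_exp_atBot
  have hleft : ∀ x θ : ℝ, ‖hankelKernel 0 (x + θ * Complex.I) - 1‖ ≤
      Real.exp x * Real.exp (Real.exp x) := by
    intro x θ
    have h := Complex.norm_exp_sub_sum_le_norm_mul_exp (Complex.exp (x + θ * Complex.I)) 1
    simpa [hankelKernel, Complex.norm_exp] using h
  have h := hankelIntegral_eq_integral_rayJump L
    ((differentiable_hankelKernel 0).sub_const 1).differentiableOn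
    (by rw [hjump]; exact integrable_zero _ _ _) hb (Eventually.of_forall fun x θ _ => hleft x θ)
  have hjump' : rayJump (hankelKernel 0) = fun _ => 0 := by
    rw [← hjump]
    funext y
    simp [rayJump]
  have hc : Continuous fun θ : ℝ => hankelKernel 0 (L + θ * Complex.I) :=
    (differentiable_hankelKernel 0).continuous.comp (by fun_prop)
  rw [hankelIntegral, hjump, integral_zero, integral_zero, zero_add,
    intervalIntegral.integral_sub (hc.intervalIntegrable _ _) intervalIntegrable_const,
    intervalIntegral.integral_const] at h
  rw [hankelIntegral, hjump', integral_zero, zero_add]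
  rw [mul_sub, sub_eq_zero] at h
  rw [h]
  simp only [Complex.real_smul]
  push_cast
  ring

/-- Hankel's formula for the reciprocal of the Gamma function. -/
lemma hankelIntegral_hankelKernel (L a : ℝ) :
    hankelIntegral L (hankelKernel a) = 2 * π * Complex.I / (Real.Gamma (1 + a) : ℝ) := by
  obtain ⟨n, hn⟩ := exists_nat_gt a
  induction n generalizing a with
  | zero => exact hankelIntegral_hankelKernel_of_neg L (by simpa using hn)
  | succ n ih =>
    rcases lt_trichotomy a 0 with ha | rfl | ha
    · exact hankelIntegral_hankelKernel_of_neg L ha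
    · simpa using hankelIntegral_hankelKernel_zero L
    · have h := ih (a - 1) (by push_cast at hn; linarith)
      have hΓ : Real.Gamma a ≠ 0 := (Real.Gamma_pos_of_pos ha).ne'
      have hΓ' : ((Real.Gamma a : ℝ) : ℂ) ≠ 0 := by exact_mod_cast hΓ
      have ha' : (a : ℂ) ≠ 0 := by exact_mod_cast ha.ne'
      rw [hankelIntegral_hankelKernel_sub_one, add_sub_cancel] at h
      rw [add_comm, Real.Gamma_add_one ha.ne', Complex.ofReal_mul]
      field_simp at h ⊢
      linear_combination h

/-- The generating function of the integrands `exp (β k c) * hankelKernel (β k)`. -/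
noncomputable def mittagLefflerKernel (β c : ℝ) (w : ℂ) : ℂ :=
  Complex.exp (Complex.exp w) * (1 - Complex.exp (-β * (w - c)))⁻¹

lemma hasSum_mittagLefflerKernel {β c : ℝ} {w : ℂ} (hβ : 0 < β) (hw : c < w.re) :
    HasSum (fun k : ℕ => ((Real.exp (β * c) ^ k : ℝ) : ℂ) * hankelKernel (k * β) w)
      (mittagLefflerKernel β c w) := by
  have hnorm : ‖Complex.exp (-β * (w - c))‖ < 1 := by
    rw [Complex.norm_exp, Real.exp_lt_one_iff]
    simp
    nlinarith
  have h := (hasSum_geometric_of_norm_lt_one hnorm).mul_left (Complex.exp (Complex.exp w))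
  have hterm : ∀ k : ℕ, ((Real.exp (β * c) ^ k : ℝ) : ℂ) * hankelKernel (k * β) w =
      Complex.exp (Complex.exp w) * Complex.exp (-β * (w - c)) ^ k := by
    intro k
    rw [hankelKernel, ← Real.exp_nat_mul, ← Complex.exp_nat_mul, ← Complex.exp_add,
      Complex.ofReal_exp, ← Complex.exp_add]
    congr 1
    push_cast
    ring
  simpa only [hterm, mittagLefflerKernel] using h

lemma hankelIntegral_mittagLefflerKernel {β c L : ℝ} (hβ : 0 < β) (hL : c < L) :
    hankelIntegral L (mittagLefflerKernel β c) =
      2 * π * Complex.I * (mittagLeffler β (Real.exp (β * c)) : ℝ) := by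
  set ρ := Real.exp (-β * (L - c)) with hρ
  have hρ0 : 0 ≤ ρ := (Real.exp_pos _).le
  have hρ1 : ρ < 1 := by
    rw [hρ, Real.exp_lt_one_iff]
    nlinarith
  set F : ℕ → ℂ → ℂ := fun k w => ((Real.exp (β * c) ^ k : ℝ) : ℂ) * hankelKernel (k * β) w with hF
  have hFc : ∀ k, Continuous (F k) := fun k =>
    (differentiable_hankelKernel _).continuous.const_mul _
  have hFn : ∀ k w, L ≤ w.re → ‖F k w‖ ≤ ρ ^ k * Real.exp (Complex.exp w).re := by
    intro k w hw
    simp only [hF]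
    rw [norm_mul, norm_hankelKernel, Complex.norm_real, norm_pow, Real.norm_eq_abs, Real.abs_exp,
      hρ, ← Real.exp_nat_mul, ← Real.exp_nat_mul, ← Real.exp_add, ← Real.exp_add, Real.exp_le_exp]
    have : 0 ≤ k * β * (w.re - L) := by
      have := sub_nonneg.2 hw
      positivity
    nlinarith
  have hray : HasSum (fun k => ∫ y in Ioi L, rayJump (F k) y)
      (∫ y in Ioi L, rayJump (mittagLefflerKernel β c) y) := by
    refine hasSum_integral_of_dominated_convergence
      (fun k y => ρ ^ k * (2 * Real.exp (-Real.exp y - 0 * y))) ?_ ?_ ?_ ?_ ?_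
    · intro k
      refine Continuous.aestronglyMeasurable ?_
      have := hFc k
      unfold rayJump
      fun_prop
    · refine fun k => ae_restrict_of_forall_mem measurableSet_Ioi fun y hy => ?_
      refine (norm_sub_le _ _).trans ?_
      have h1 := hFn k (y + (π : ℝ) * Complex.I) (by simpa using le_of_lt hy)
      have h2 := hFn k (y + (-π : ℝ) * Complex.I) (by simpa using le_of_lt hy)
      rw [exp_add_pi_mul_I, ← Complex.ofReal_neg, Complex.ofReal_re] at h1
      rw [exp_add_neg_pi_mul_I, ← Complex.ofReal_neg, Complex.ofReal_re] at h2
      rw [zero_mul, sub_zero]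
      linarith
    · exact Eventually.of_forall fun y => (summable_geometric_of_lt_one hρ0 hρ1).mul_right _
    · simp only [tsum_mul_right]
      exact ((integrableOn_exp_neg_exp_sub_mul 0 L).const_mul 2).const_mul _
    · refine ae_restrict_of_forall_mem measurableSet_Ioi fun y hy => ?_
      exact (hasSum_mittagLefflerKernel hβ (by simpa using hL.trans hy)).sub
        (hasSum_mittagLefflerKernel hβ (by simpa using hL.trans hy))
  have hvert : HasSum (fun k => ∫ θ in (-π)..π, F k (L + θ * Complex.I))
      (∫ θ in (-π)..π, mittagLefflerKernel β c (L + θ * Complex.I)) := by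
    refine intervalIntegral.hasSum_integral_of_dominated_convergence
      (fun k _ => ρ ^ k * Real.exp (Real.exp L)) ?_ ?_ ?_ ?_ ?_
    · intro k
      exact ((hFc k).comp (by fun_prop)).aestronglyMeasurable
    · refine fun k => Eventually.of_forall fun θ _ => ?_
      refine (hFn k _ (by simp)).trans ?_
      gcongr
      simpa using re_exp_le_exp_re (L + θ * Complex.I)
    · exact Eventually.of_forall fun y _ => (summable_geometric_of_lt_one hρ0 hρ1).mul_right _
    · exact intervalIntegrable_const
    · exact Eventually.of_forall fun θ _ => hasSum_mittagLefflerKernel hβ (by simpa using hL)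
  have hsum : HasSum (fun k => hankelIntegral L (F k))
      (hankelIntegral L (mittagLefflerKernel β c)) := hray.add (hvert.mul_left Complex.I)
  rw [← hsum.tsum_eq, mittagLeffler, Complex.ofReal_tsum, ← tsum_mul_left]
  refine tsum_congr fun k => ?_
  rw [hF, hankelIntegral_const_mul, hankelIntegral_hankelKernel]
  push_cast
  ring

lemma mittagLeffler_one (x : ℝ) : mittagLeffler 1 x = Real.exp x := by
  rw [Real.exp_eq_exp_ℝ, NormedSpace.exp_eq_tsum_div, mittagLeffler]
  refine tsum_congr fun k => ?_
  rw [mul_one, add_comm, Real.Gamma_nat_eq_factorial]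

lemma continuous_mittagLefflerKernel_vertical {β c L : ℝ} (hβ : 0 < β) (hL : c < L) :
    Continuous fun θ : ℝ => mittagLefflerKernel β c (L + θ * Complex.I) := by
  unfold mittagLefflerKernel
  refine Continuous.mul (by fun_prop) (Continuous.inv₀ (by fun_prop) fun θ h => ?_)
  have hnorm := congrArg norm (sub_eq_zero.1 h)
  rw [Complex.norm_exp, norm_one, eq_comm, Real.exp_eq_one_iff] at hnorm
  simp at hnorm
  rcases hnorm with h | h <;> linarith

lemma norm_mittagLefflerKernel_le {β c x : ℝ} (θ : ℝ) (hβ : 0 < β) (hx : x < c) :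
    ‖mittagLefflerKernel β c (x + θ * Complex.I)‖ ≤
      Real.exp (Real.exp x) * (Real.exp (-β * (x - c)) - 1)⁻¹ := by
  have hpos : 0 < Real.exp (-β * (x - c)) - 1 := by
    rw [sub_pos, Real.one_lt_exp_iff]
    nlinarith
  have hden : Real.exp (-β * (x - c)) - 1 ≤
      ‖1 - Complex.exp (-β * ((x : ℂ) + θ * Complex.I - c))‖ := by
    have h := norm_sub_norm_le (Complex.exp (-β * ((x : ℂ) + θ * Complex.I - c))) 1
    rw [norm_sub_rev, Complex.norm_exp, norm_one] at h
    simpa using h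
  rw [mittagLefflerKernel, norm_mul, norm_inv]
  refine mul_le_mul ?_ (inv_anti₀ hpos hden) (by positivity) (by positivity)
  rw [Complex.norm_exp, Real.exp_le_exp]
  simpa using re_exp_le_exp_re (x + θ * Complex.I)

lemma tendsto_mittagLefflerKernel_bound {β : ℝ} (c : ℝ) (hβ : 0 < β) :
    Tendsto (fun x : ℝ => Real.exp (Real.exp x) * (Real.exp (-β * (x - c)) - 1)⁻¹)
      atBot (𝓝 0) := by
  have h1 : Tendsto (fun x : ℝ => -β * (x - c)) atBot atTop :=
    (tendsto_atBot_add_const_right _ (-c) tendsto_id).const_mul_atBot_of_neg (neg_neg_of_pos hβ)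
  have h2 := tendsto_inv_atTop_zero.comp
    (tendsto_atTop_add_const_right _ (-1) (Real.tendsto_exp_atTop.comp h1))
  simpa [sub_eq_add_neg] using tendsto_exp_exp_atBot.mul h2

lemma norm_mittagLefflerKernel_ray_le {α c y t : ℝ} (hs : Real.sin (α * t) ≠ 0)
    (ht : Complex.exp (y + t * Complex.I) = -(Real.exp y : ℝ)) :
    ‖mittagLefflerKernel α c (y + t * Complex.I)‖ ≤
      Real.exp (-α * c) / |Real.sin (α * t)| * Real.exp (-Real.exp y + α * y) := by
  have hden : Real.exp (-α * (y - c)) * |Real.sin (α * t)| ≤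
      ‖1 - Complex.exp (-α * ((y : ℂ) + t * Complex.I - c))‖ := by
    refine le_trans (le_of_eq ?_) (Complex.abs_im_le_norm _)
    simp [Complex.exp_im, abs_mul]
  have hpos : 0 < Real.exp (-α * (y - c)) * |Real.sin (α * t)| := by positivity
  rw [mittagLefflerKernel, norm_mul, norm_inv, ht, Complex.norm_exp, ← Complex.ofReal_neg,
    Complex.ofReal_re]
  refine (mul_le_mul_of_nonneg_left (inv_anti₀ hpos hden) (Real.exp_pos _).le).trans
    (le_of_eq ?_)
  have h : Real.exp (-α * c) * Real.exp (-Real.exp y + α * y) =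
      Real.exp (-Real.exp y) * (Real.exp (-α * (y - c)))⁻¹ := by
    rw [← Real.exp_neg, ← Real.exp_add, ← Real.exp_add]
    ring_nf
  rw [mul_inv, ← mul_assoc, ← h]
  ring

lemma norm_rayJump_mittagLefflerKernel_le {α c : ℝ} (hα : 0 < α) (hα1 : α < 1) (y : ℝ) :
    ‖rayJump (mittagLefflerKernel α c) y‖ ≤
      2 * Real.exp (-α * c) / Real.sin (α * π) * Real.exp (-Real.exp y + α * y) := by
  have hs : 0 < Real.sin (α * π) :=
    Real.sin_pos_of_pos_of_lt_pi (by positivity) (by nlinarith [pi_pos])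
  have h1 := norm_mittagLefflerKernel_ray_le (α := α) (c := c) hs.ne' (exp_add_pi_mul_I y)
  have h2 := norm_mittagLefflerKernel_ray_le (α := α) (c := c) (t := -π)
    (by rw [mul_neg, Real.sin_neg]; exact neg_ne_zero.2 hs.ne') (exp_add_neg_pi_mul_I y)
  rw [abs_of_pos hs] at h1
  rw [mul_neg, Real.sin_neg, abs_neg, abs_of_pos hs] at h2
  refine (norm_sub_le _ _).trans ((add_le_add h1 h2).trans (le_of_eq ?_))
  ring

lemma rayJump_mittagLefflerKernel_one (c y : ℝ) : rayJump (mittagLefflerKernel 1 c) y = 0 := by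
  have h : (y : ℂ) + (π : ℝ) * Complex.I = y + (-π : ℝ) * Complex.I + 2 * π * Complex.I := by
    push_cast
    ring
  have h' : ∀ w : ℂ, -((1 : ℝ) : ℂ) * (w + 2 * π * Complex.I - c) =
      -((1 : ℝ) : ℂ) * (w - c) - 2 * π * Complex.I := by
    intro w
    push_cast
    ring
  rw [rayJump, h, sub_eq_zero]
  simp only [mittagLefflerKernel]
  rw [h', Complex.exp_periodic _, Complex.exp_periodic.sub_eq]

/-- The poles at `0` of `1 / (1 - exp (-α z))` and `1 / (α * (1 - exp (-z)))` cancel. -/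
lemma exists_differentiableOn_eq_inv_sub_inv {α : ℝ} (hα : 0 < α) (hα1 : α < 1) :
    ∃ g : ℂ → ℂ, DifferentiableOn ℂ g {z | |z.im| < 2 * π} ∧
      ∀ z : ℂ, z ≠ 0 → |z.im| < 2 * π →
        g z = (1 - Complex.exp (-α * z))⁻¹ - (α : ℂ)⁻¹ * (1 - Complex.exp (-z))⁻¹ := by
  set S : Set ℂ := {z | |z.im| < 2 * π} with hS
  have hα0 : (α : ℂ) ≠ 0 := by exact_mod_cast hα.ne'
  have hSo : IsOpen S := isOpen_lt (by fun_prop) continuous_const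
  have h0S : (0 : ℂ) ∈ S := by simp [hS, pi_pos]
  have hαS : ∀ z ∈ S, (α : ℂ) * z ∈ S := by
    intro z hz
    simp only [hS, mem_ofPred_eq, Complex.im_ofReal_mul, abs_mul,
      abs_of_pos hα] at hz ⊢
    nlinarith [abs_nonneg z.im]
  set p : ℂ → ℂ := dslope (fun z => 1 - Complex.exp (-z)) 0 with hp
  have hpd : Differentiable ℂ p := by
    rw [← differentiableOn_univ, hp, Complex.differentiableOn_dslope univ_mem]
    fun_prop
  have hp0 : p 0 = 1 := by
    have h : HasDerivAt (fun z : ℂ => 1 - Complex.exp (-z)) 1 0 := by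
      simpa using ((hasDerivAt_id (0 : ℂ)).neg.cexp).const_sub 1
    rw [hp, dslope_same, h.deriv]
  have hpz : ∀ z, z ≠ 0 → p z = (1 - Complex.exp (-z)) / z := by
    intro z hz
    rw [hp, dslope_of_ne _ hz, slope_def_field]
    simp
  have hpne : ∀ z ∈ S, p z ≠ 0 := by
    intro z hz
    rcases eq_or_ne z 0 with rfl | hz0
    · rw [hp0]
      exact one_ne_zero
    · rw [hpz z hz0]
      refine div_ne_zero (fun h => hz0 ?_) hz0
      obtain ⟨n, hn⟩ := Complex.exp_eq_one_iff.1 (sub_eq_zero.1 h).symm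
      have him := congrArg Complex.im hn
      simp at him
      have hz' : |z.im| < 2 * π := hz
      rw [← abs_neg, him, abs_mul, abs_of_pos (by positivity : 0 < 2 * π)] at hz'
      have hn1 : |(n : ℝ)| < 1 := by
        by_contra! hcon
        nlinarith [pi_pos]
      have hn0 : n = 0 := Int.abs_lt_one_iff.1 (by exact_mod_cast hn1)
      simpa [hn0] using hn
  set q : ℂ → ℂ := fun z => (p (α * z))⁻¹ - (p z)⁻¹ with hq
  have hqd : DifferentiableOn ℂ q S :=
    ((hpd.comp (differentiable_id.const_mul (α : ℂ))).differentiableOn.inv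
      fun z hz => hpne _ (hαS z hz)).sub (hpd.differentiableOn.inv hpne)
  refine ⟨fun z => (α : ℂ)⁻¹ * dslope q 0 z,
    ((Complex.differentiableOn_dslope (hSo.mem_nhds h0S)).2 hqd).const_mul _, fun z hz _ => ?_⟩
  simp only
  rw [dslope_of_ne _ hz, slope_def_field]
  simp only [hq]
  rw [mul_zero, sub_self, sub_zero, sub_zero, hpz z hz, hpz _ (mul_ne_zero hα0 hz), inv_div,
    inv_div, neg_mul]
  field_simp

theorem norm_mittagLeffler_sub_le {α : ℝ} (hα : 0 < α) (hα1 : α < 1) (c : ℝ) :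
    ‖2 * π * Complex.I * ((mittagLeffler α (Real.exp (α * c)) -
      α⁻¹ * Real.exp (Real.exp c) : ℝ) : ℂ)‖ ≤
      2 * Real.exp (-α * c) / Real.sin (α * π) * Real.Gamma α := by
  obtain ⟨g, hgd, hg⟩ := exists_differentiableOn_eq_inv_sub_inv hα hα1
  set Ψ : ℂ → ℂ := fun w => Complex.exp (Complex.exp w) * g (w - c) with hΨ
  have hΨeq : ∀ x θ : ℝ, |θ| ≤ π → (x ≠ c ∨ θ ≠ 0) → Ψ (x + θ * Complex.I) =
      mittagLefflerKernel α c (x + θ * Complex.I) -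
        (α : ℂ)⁻¹ * mittagLefflerKernel 1 c (x + θ * Complex.I) := by
    intro x θ hθ hne
    simp only [hΨ, mittagLefflerKernel]
    rw [hg]
    · push_cast
      ring_nf
    · intro h
      have hre := congrArg Complex.re h
      have him := congrArg Complex.im h
      simp at hre him
      rcases hne with h' | h'
      · exact h' (sub_eq_zero.1 hre)
      · exact h' him
    · simp
      linarith [pi_pos]
  have hΨd : DifferentiableOn ℂ Ψ {w | |w.im| ≤ π} := by
    refine DifferentiableOn.mul (by fun_prop) (hgd.comp (by fun_prop) fun w hw => ?_)
    simp only [mem_ofPred_eq] at hw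
    simp
    linarith [pi_pos]
  have hjump : rayJump Ψ = rayJump (mittagLefflerKernel α c) := by
    funext y
    have h := rayJump_mittagLefflerKernel_one c y
    rw [rayJump] at h ⊢
    rw [rayJump, hΨeq y π (abs_of_pos pi_pos).le (Or.inr pi_ne_zero),
      hΨeq y (-π) (by rw [abs_neg, abs_of_pos pi_pos]) (Or.inr (neg_ne_zero.2 pi_ne_zero))]
    linear_combination (-(α : ℂ)⁻¹) * h
  have hbound : ∀ y, ‖rayJump Ψ y‖ ≤
      2 * Real.exp (-α * c) / Real.sin (α * π) * Real.exp (-Real.exp y + α * y) := by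
    intro y
    rw [hjump]
    exact norm_rayJump_mittagLefflerKernel_le hα hα1 y
  have hboundint := (integrable_exp_neg_exp_add_mul hα).const_mul
    (2 * Real.exp (-α * c) / Real.sin (α * π))
  have hcont : Continuous (rayJump Ψ) := by
    have h : ∀ θ : ℝ, |θ| ≤ π → Continuous fun y : ℝ => Ψ (y + θ * Complex.I) := fun θ hθ =>
      hΨd.continuousOn.comp_continuous (by fun_prop) fun y => by simpa using hθ
    exact (h π (abs_of_pos pi_pos).le).sub (h (-π) (by rw [abs_neg, abs_of_pos pi_pos]))
  have hint : Integrable (rayJump Ψ) :=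
    hboundint.mono' hcont.aestronglyMeasurable (Eventually.of_forall hbound)
  have hb := (tendsto_mittagLefflerKernel_bound c hα).add
    ((tendsto_mittagLefflerKernel_bound c one_pos).const_mul α⁻¹)
  rw [mul_zero, add_zero] at hb
  have hcollapse := hankelIntegral_eq_integral_rayJump (c + 1) hΨd hint hb (by
    filter_upwards [eventually_lt_atBot c] with x hx θ hθ
    rw [hΨeq x θ hθ (Or.inl hx.ne)]
    refine (norm_sub_le _ _).trans (add_le_add (norm_mittagLefflerKernel_le θ hα hx) ?_)
    rw [norm_mul, norm_inv, Complex.norm_real, Real.norm_eq_abs, abs_of_pos hα]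
    exact mul_le_mul_of_nonneg_left (norm_mittagLefflerKernel_le θ one_pos hx) (by positivity))
  have hc : c < c + 1 := by linarith
  have hα' := hankelIntegral_mittagLefflerKernel hα hc
  have h1' := hankelIntegral_mittagLefflerKernel one_pos hc
  have hsplit : hankelIntegral (c + 1) Ψ = hankelIntegral (c + 1) (mittagLefflerKernel α c) -
      (α : ℂ)⁻¹ * hankelIntegral (c + 1) (mittagLefflerKernel 1 c) := by
    have hvert : ∫ θ in (-π)..π, Ψ ((c + 1 : ℝ) + θ * Complex.I) =
        ∫ θ in (-π)..π, (mittagLefflerKernel α c ((c + 1 : ℝ) + θ * Complex.I) -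
          (α : ℂ)⁻¹ * mittagLefflerKernel 1 c ((c + 1 : ℝ) + θ * Complex.I)) := by
      refine intervalIntegral.integral_congr fun θ hθ => ?_
      rw [uIcc_of_le (by linarith [pi_pos])] at hθ
      exact hΨeq _ θ (abs_le.2 hθ) (Or.inl hc.ne')
    rw [intervalIntegral.integral_sub
      ((continuous_mittagLefflerKernel_vertical hα hc).intervalIntegrable _ _)
      (((continuous_mittagLefflerKernel_vertical one_pos hc).const_mul _).intervalIntegrable _ _),
      intervalIntegral.integral_const_mul] at hvert
    simp only [hankelIntegral, hjump, rayJump_mittagLefflerKernel_one, integral_zero, zero_add]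
    rw [hvert]
    ring
  rw [one_mul, mittagLeffler_one] at h1'
  have hfinal : 2 * π * Complex.I * ((mittagLeffler α (Real.exp (α * c)) -
      α⁻¹ * Real.exp (Real.exp c) : ℝ) : ℂ) = ∫ y, rayJump Ψ y := by
    rw [← hcollapse, hsplit, hα', h1']
    simp only [Complex.ofReal_sub, Complex.ofReal_mul, Complex.ofReal_inv]
    ring
  rw [hfinal]
  refine (norm_integral_le_of_norm_le hboundint (Eventually.of_forall hbound)).trans (le_of_eq ?_)
  rw [integral_const_mul, integral_exp_neg_exp_add_mul hα]

theorem mittagLeffler_asymp_top (α : ℝ) (hα : 0 < α) (hα1 : α < 1) :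
    ∃ C > (0 : ℝ), ∃ R > (0 : ℝ), ∀ r : ℝ, R ≤ r →
      |mittagLeffler α r - (1 / α) * Real.exp (r ^ (1 / α))| ≤ C / r := by
  have hs : 0 < Real.sin (α * π) :=
    Real.sin_pos_of_pos_of_lt_pi (by positivity) (by nlinarith [pi_pos])
  have hΓ : 0 < Real.Gamma α := Real.Gamma_pos_of_pos hα
  refine ⟨Real.Gamma α / (π * Real.sin (α * π)), by positivity, 1, one_pos, fun r hr => ?_⟩
  have hr0 : 0 < r := one_pos.trans_le hr
  have h := norm_mittagLeffler_sub_le hα hα1 (Real.log r / α)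
  have e1 : α * (Real.log r / α) = Real.log r := by field_simp
  have e2 : Real.exp (Real.log r / α) = r ^ (1 / α) := by
    rw [Real.rpow_def_of_pos hr0, mul_one_div]
  rw [neg_mul, Real.exp_neg, e1, Real.exp_log hr0, e2, norm_mul, Complex.norm_real,
    Real.norm_eq_abs, ← one_div α] at h
  have hnorm : ‖2 * (π : ℂ) * Complex.I‖ = 2 * π := by
    simp [abs_of_pos pi_pos]
  rw [hnorm, mul_comm, ← le_div_iff₀ (by positivity)] at h
  refine h.trans (le_of_eq ?_)
  field_simp
end

section
/- Let 0 < α < 1. Then, as r → −∞, E_α(r) + 1/(Γ(1−α)·r) = O(1/r²); that is, there exist constants C > 0 and R > 0 such that |E_α(r) + 1/(Γ(1−α) r)| ≤ C/r² for all r ≤ −R. -/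
open Real

theorem rpow_mul_exp_neg_le_Gamma_one_add {A s : ℝ} (hA : 0 < A) (hs : 0 ≤ s) :
    A ^ s * exp (-A) ≤ Gamma (1 + s) := by
  have hs1 : 0 < 1 + s := by linarith
  rw [Real.Gamma_eq_integral hs1, ← integral_exp_neg_Ioi A, ← MeasureTheory.integral_const_mul]
  have hint := Real.GammaIntegral_convergent hs1
  have hsub : Set.Ioi A ⊆ Set.Ioi 0 := Set.Ioi_subset_Ioi hA.le
  calc
    _ ≤ ∫ x in Set.Ioi A, exp (-x) * x ^ (1 + s - 1) := by
      refine MeasureTheory.setIntegral_mono_on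
        ((integrableOn_exp_neg_Ioi A).const_mul _) (hint.mono_set hsub) measurableSet_Ioi ?_
      intro x hx
      rw [add_sub_cancel_left, mul_comm]
      have : A ^ s ≤ x ^ s := Real.rpow_le_rpow hA.le (le_of_lt hx) hs
      gcongr
    _ ≤ _ := by
      refine MeasureTheory.setIntegral_mono_set hint ?_ (Filter.Eventually.of_forall hsub)
      filter_upwards [MeasureTheory.ae_restrict_mem measurableSet_Ioi] with x hx
      have : (0:ℝ) < x := hx
      simp only [Pi.zero_apply]
      positivity

theorem norm_GammaSeq_add_mul_I {a : ℝ} (ha : 0 < a) (y : ℝ) (n : ℕ) :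
    ‖Complex.GammaSeq (a + y * Complex.I) n‖ =
      (n : ℝ) ^ a * n.factorial / ∏ j ∈ Finset.range (n + 1), ‖(a : ℂ) + y * Complex.I + j‖ := by
  rw [Complex.GammaSeq, norm_div, norm_mul, norm_prod, Complex.norm_natCast,
    Complex.norm_natCast_cpow_of_re_ne_zero _ (by simpa using ha.ne')]
  simp

theorem norm_GammaSeq_mul_le {a c : ℝ} (hc : 0 < c) (hca : c ≤ a) (y : ℝ) (n : ℕ) :
    ‖Complex.GammaSeq a n‖ * ‖Complex.GammaSeq (c + y * Complex.I) n‖ ≤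
      ‖Complex.GammaSeq (a + y * Complex.I) n‖ * ‖Complex.GammaSeq c n‖ := by
  have ha : 0 < a := hc.trans_le hca
  have h0 (d : ℝ) : Complex.GammaSeq d n = Complex.GammaSeq (d + (0 : ℝ) * Complex.I) n := by simp
  have hpos (d z : ℝ) (hd : 0 < d) :
      0 < ∏ j ∈ Finset.range (n + 1), ‖(d : ℂ) + z * Complex.I + j‖ := by
    refine Finset.prod_pos fun j _ => norm_pos_iff.2 fun h => ?_
    have h' := congrArg Complex.re h
    simp only [Complex.add_re, Complex.ofReal_re, Complex.re_ofReal_mul, Complex.I_re, mul_zero,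
      add_zero, Complex.natCast_re, Complex.zero_re] at h'
    linarith [(j.cast_nonneg : (0 : ℝ) ≤ j)]
  rw [h0 a, h0 c, norm_GammaSeq_add_mul_I ha, norm_GammaSeq_add_mul_I ha,
    norm_GammaSeq_add_mul_I hc, norm_GammaSeq_add_mul_I hc, div_mul_div_comm, div_mul_div_comm]
  refine div_le_div_of_nonneg_left (by positivity) (mul_pos (hpos a y ha) (hpos c 0 hc)) ?_
  rw [← Finset.prod_mul_distrib, ← Finset.prod_mul_distrib]
  refine Finset.prod_le_prod (fun j _ => by positivity) fun j _ => ?_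
  rw [← norm_mul, ← norm_mul]
  refine le_of_sq_le_sq ?_ (norm_nonneg _)
  simp only [Complex.sq_norm, map_mul, Complex.normSq_apply, Complex.add_re, Complex.ofReal_re,
    Complex.re_ofReal_mul, Complex.I_re, mul_zero, add_zero, Complex.natCast_re, Complex.add_im,
    Complex.ofReal_im, Complex.im_ofReal_mul, Complex.I_im, mul_one, zero_add, Complex.natCast_im]
  have hj : (0 : ℝ) ≤ j := j.cast_nonneg
  have : (c + j) * (c + j) ≤ (a + j) * (a + j) := by gcongr
  nlinarith [mul_le_mul_of_nonneg_left this (mul_self_nonneg y)]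

theorem Gamma_mul_norm_Gamma_le {a c : ℝ} (hc : 0 < c) (hca : c ≤ a) (y : ℝ) :
    Gamma a * ‖Complex.Gamma (c + y * Complex.I)‖ ≤
      ‖Complex.Gamma (a + y * Complex.I)‖ * Gamma c := by
  have h := le_of_tendsto_of_tendsto'
    ((Complex.GammaSeq_tendsto_Gamma a).norm.mul
      (Complex.GammaSeq_tendsto_Gamma (c + y * Complex.I)).norm)
    ((Complex.GammaSeq_tendsto_Gamma (a + y * Complex.I)).norm.mul
      (Complex.GammaSeq_tendsto_Gamma c).norm)
    (norm_GammaSeq_mul_le hc hca y)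
  rwa [Complex.Gamma_ofReal, Complex.Gamma_ofReal, Complex.norm_real, Complex.norm_real,
    Real.norm_of_nonneg (Gamma_pos_of_pos (hc.trans_le hca)).le,
    Real.norm_of_nonneg (Gamma_pos_of_pos hc).le] at h

theorem cosh_le_exp_abs (x : ℝ) : cosh x ≤ exp |x| := by
  rw [← cosh_abs, ← cosh_add_sinh |x|]
  linarith [sinh_nonneg_iff.2 (abs_nonneg x)]

theorem exp_abs_le_two_mul_cosh (x : ℝ) : exp |x| ≤ 2 * cosh x := by
  rw [← cosh_abs, cosh_eq]
  linarith [exp_pos (-|x|)]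

theorem sin_pi_mul_half_add (t : ℝ) :
    Complex.sin (π * ((1 / 2 : ℝ) + t * Complex.I)) = (cosh (π * t) : ℝ) := by
  rw [show (π : ℂ) * ((1 / 2 : ℝ) + t * Complex.I) = (π * t : ℂ) * Complex.I + π / 2 by
    push_cast; ring, Complex.sin_add_pi_div_two, Complex.cos_mul_I]
  push_cast; rfl

theorem norm_Gamma_half_sq_mul_cosh (y : ℝ) :
    ‖Complex.Gamma ((1 / 2 : ℝ) + y * Complex.I)‖ ^ 2 * cosh (π * y) = π := by
  have h := Complex.Gamma_mul_Gamma_one_sub ((1 / 2 : ℝ) + y * Complex.I)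
  have h1 : (1 : ℂ) - ((1 / 2 : ℝ) + y * Complex.I) =
      (starRingEnd ℂ) ((1 / 2 : ℝ) + y * Complex.I) := by
    simp only [map_add, map_mul, Complex.conj_ofReal, Complex.conj_I]
    push_cast; ring
  rw [h1, Complex.Gamma_conj, Complex.mul_conj, sin_pi_mul_half_add, ← Complex.sq_norm] at h
  have hc := (cosh_pos (π * y)).ne'
  have h' : ‖Complex.Gamma ((1 / 2 : ℝ) + y * Complex.I)‖ ^ 2 = π / cosh (π * y) := by
    exact_mod_cast h
  rw [h', div_mul_cancel₀ _ hc]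

theorem Gamma_le_norm_Gamma_mul_exp {a : ℝ} (ha : 1 / 2 ≤ a) (y : ℝ) :
    Gamma a ≤ ‖Complex.Gamma (a + y * Complex.I)‖ * exp (π * |y|) := by
  have h := Gamma_mul_norm_Gamma_le (by norm_num : (0:ℝ) < 1 / 2) ha y
  have hs := norm_Gamma_half_sq_mul_cosh y
  set N := ‖Complex.Gamma ((1 / 2 : ℝ) + y * Complex.I)‖
  have hG : Gamma (1 / 2) = √π := Gamma_one_half_eq
  have hc := cosh_le_exp_abs (π * y)
  rw [abs_mul, abs_of_pos pi_pos] at hc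
  have hE : 1 ≤ exp (π * |y|) := one_le_exp (by positivity)
  have hN0 : 0 ≤ N := norm_nonneg _
  have hN : √π ≤ N * exp (π * |y|) := by
    refine Real.sqrt_le_iff.2 ⟨by positivity, ?_⟩
    calc π = N ^ 2 * cosh (π * y) := hs.symm
      _ ≤ N ^ 2 * exp (π * |y|) ^ 2 := by gcongr; nlinarith
      _ = _ := by ring
  have hsp : 0 < √π := sqrt_pos.2 pi_pos
  rw [hG] at h
  have hGa : 0 < Gamma a := Gamma_pos_of_pos (by linarith)
  refine le_of_mul_le_mul_right ?_ hsp
  calc Gamma a * √π ≤ Gamma a * (N * exp (π * |y|)) := by gcongr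
    _ = (Gamma a * N) * exp (π * |y|) := by ring
    _ ≤ _ := by
      refine (mul_le_mul_of_nonneg_right h (exp_pos _).le).trans_eq (by ring)

theorem integrable_exp_neg_mul_abs {a : ℝ} (ha : 0 < a) :
    MeasureTheory.Integrable fun t : ℝ => exp (-a * |t|) := by
  rw [← MeasureTheory.integrableOn_univ, ← Set.Iic_union_Ioi (a := (0 : ℝ))]
  refine MeasureTheory.IntegrableOn.union ?_ ?_
  · refine (integrableOn_exp_mul_Iic ha 0).congr_fun (fun t ht => ?_) measurableSet_Iic
    simp only [abs_of_nonpos (Set.mem_Iic.1 ht), neg_mul_neg]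
  · refine (integrableOn_exp_mul_Ioi (neg_neg_of_pos ha) 0).congr_fun (fun t ht => ?_)
      measurableSet_Ioi
    simp only [abs_of_pos (Set.mem_Ioi.1 ht)]

theorem exp_abs_div_cosh_le (b t : ℝ) :
    exp (b * |t|) / cosh (π * t) ≤ 2 * exp (-(π - b) * |t|) := by
  have h := exp_abs_le_two_mul_cosh (π * t)
  rw [abs_mul, abs_of_pos pi_pos] at h
  rw [div_le_iff₀ (cosh_pos _)]
  calc exp (b * |t|) = exp (-(π - b) * |t|) * exp (π * |t|) := by rw [← exp_add]; ring_nf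
    _ ≤ exp (-(π - b) * |t|) * (2 * cosh (π * t)) := by gcongr
    _ = _ := by ring

theorem integrable_exp_abs_div_cosh {b : ℝ} (hb : b < π) :
    MeasureTheory.Integrable fun t : ℝ => exp (b * |t|) / cosh (π * t) := by
  refine ((integrable_exp_neg_mul_abs (sub_pos.2 hb)).const_mul 2).mono' ?_ ?_
  · exact (Continuous.div (by fun_prop) (by fun_prop)
      fun t => (cosh_pos (π * t)).ne').aestronglyMeasurable
  · refine Filter.Eventually.of_forall fun t => ?_
    rw [norm_of_nonneg (div_nonneg (exp_pos _).le (cosh_pos _).le)]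
    exact exp_abs_div_cosh_le b t

theorem norm_div_cosh_le {z : ℂ} {C b t : ℝ} (h : ‖z‖ ≤ C * exp (b * |t|)) :
    ‖z / (cosh (π * t) : ℝ)‖ ≤ C * (exp (b * |t|) / cosh (π * t)) := by
  rw [norm_div, Complex.norm_real, norm_of_nonneg (cosh_pos _).le, ← mul_div_assoc]
  exact div_le_div_of_nonneg_right h (cosh_pos _).le

theorem integrable_div_cosh {f : ℝ → ℂ} (hf : Continuous f) {C b : ℝ} (hb : b < π)
    (h : ∀ t, ‖f t‖ ≤ C * exp (b * |t|)) :
    MeasureTheory.Integrable fun t : ℝ => f t / (cosh (π * t) : ℝ) := by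
  refine ((integrable_exp_abs_div_cosh hb).const_mul C).mono' ?_
    (Filter.Eventually.of_forall fun t => norm_div_cosh_le (h t))
  refine (Continuous.div hf (by fun_prop) fun t => ?_).aestronglyMeasurable
  exact_mod_cast (cosh_pos (π * t)).ne'

theorem norm_integral_div_cosh_le {f : ℝ → ℂ} {C b : ℝ} (hb : b < π)
    (h : ∀ t, ‖f t‖ ≤ C * exp (b * |t|)) :
    ‖∫ t : ℝ, f t / (cosh (π * t) : ℝ)‖ ≤ C * ∫ t : ℝ, exp (b * |t|) / cosh (π * t) := by
  rw [← MeasureTheory.integral_const_mul]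
  exact MeasureTheory.norm_integral_le_of_norm_le ((integrable_exp_abs_div_cosh hb).const_mul C)
    (Filter.Eventually.of_forall fun t => norm_div_cosh_le (h t))

theorem integral_inv_cosh : ∫ t : ℝ, (cosh (π * t))⁻¹ = 1 := by
  have hder (t : ℝ) : HasDerivAt (fun t => π⁻¹ * arctan (sinh (π * t))) (cosh (π * t))⁻¹ t := by
    have h := (((hasDerivAt_id t).const_mul π).sinh.arctan).const_mul π⁻¹
    refine h.congr_deriv ?_
    have h1 : 1 + sinh (π * t) ^ 2 = cosh (π * t) ^ 2 := by rw [cosh_sq]; ring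
    rw [show 1 + sinh (π * id t) ^ 2 = cosh (π * t) ^ 2 from h1]
    have hc := (cosh_pos (π * t)).ne'
    simp only [id]
    field_simp
  have hint : MeasureTheory.Integrable fun t : ℝ => (cosh (π * t))⁻¹ := by
    simpa using integrable_exp_abs_div_cosh pi_pos
  have htop : Filter.Tendsto (fun t => sinh (π * t)) Filter.atTop Filter.atTop :=
    sinhOrderIso.tendsto_atTop.comp (Filter.tendsto_id.const_mul_atTop pi_pos)
  have hbot : Filter.Tendsto (fun t => sinh (π * t)) Filter.atBot Filter.atBot :=
    sinhOrderIso.tendsto_atBot.comp (Filter.tendsto_id.const_mul_atBot pi_pos)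
  rw [MeasureTheory.integral_of_hasDerivAt_of_tendsto hder hint
    (((tendsto_arctan_atBot.mono_right nhdsWithin_le_nhds).comp hbot).const_mul π⁻¹)
    (((tendsto_arctan_atTop.mono_right nhdsWithin_le_nhds).comp htop).const_mul π⁻¹)]
  field_simp
  norm_num

theorem sinh_le_norm_sin (x y : ℝ) :
    sinh |y| ≤ ‖Complex.sin (x + y * Complex.I)‖ := by
  refine le_of_sq_le_sq ?_ (norm_nonneg _)
  have h : Complex.sin (x + y * Complex.I) =
      (sin x * cosh y : ℝ) + (cos x * sinh y : ℝ) * Complex.I := by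
    rw [Complex.sin_add_mul_I]
    push_cast
    ring
  rw [h, Complex.sq_norm, Complex.normSq_add_mul_I]
  have h1 := cosh_sq y
  have h2 := sin_sq_add_cos_sq x
  have h3 : sinh |y| ^ 2 = sinh y ^ 2 := by
    rcases abs_choice y with h | h <;> simp [h]
  nlinarith [sq_nonneg (sin x)]

theorem sin_pi_mul_ne_zero_of_abs_re_lt_one {s : ℂ} (h : |s.re| < 1) (hs : s ≠ 0) :
    Complex.sin (π * s) ≠ 0 := by
  intro h0
  obtain ⟨k, hk⟩ := Complex.sin_eq_zero_iff.1 h0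
  have hπ : (π : ℂ) ≠ 0 := by exact_mod_cast pi_ne_zero
  have hk' : s = k := mul_left_cancel₀ hπ (by rw [hk]; ring)
  rw [hk', Complex.intCast_re] at h
  have : |k| < 1 := by exact_mod_cast h
  exact hs (by rw [hk', Int.abs_lt_one_iff.1 this]; simp)

theorem sin_pi_mul_neg_half_add (t : ℝ) :
    Complex.sin (π * ((-(1 / 2) : ℝ) + t * Complex.I)) = -(cosh (π * t) : ℝ) := by
  rw [show (π : ℂ) * ((-(1 / 2) : ℝ) + t * Complex.I) = (π * t : ℂ) * Complex.I - π / 2 by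
    push_cast; ring, Complex.sin_sub_pi_div_two, Complex.cos_mul_I]
  push_cast; rfl

open Filter Topology in
/-- If `g` is entire, vanishes at `0` and grows slower than `exp (π |Im s|)` on the strip
`|Re s| ≤ 1/2`, then its mean over the boundary with respect to the Poisson kernel vanishes. -/
theorem integral_strip_div_cosh_eq_zero {g : ℂ → ℂ} (hg : Differentiable ℂ g) (hg0 : g 0 = 0)
    {C b : ℝ} (hb : b < π) (hbd : ∀ s : ℂ, |s.re| ≤ 1 / 2 → ‖g s‖ ≤ C * exp (b * |s.im|)) :
    (∫ t : ℝ, g ((1 / 2 : ℝ) + t * Complex.I) / (cosh (π * t) : ℝ)) +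
      ∫ t : ℝ, g ((-(1 / 2) : ℝ) + t * Complex.I) / (cosh (π * t) : ℝ) = 0 := by
  set S : ℂ → ℂ := fun s => Complex.sin (π * s)
  have hS : Differentiable ℂ S := by fun_prop
  set φ : ℂ → ℂ := fun s => dslope g 0 s / dslope S 0 s
  have hπ : (π : ℂ) ≠ 0 := by exact_mod_cast pi_ne_zero
  have hdd {f : ℂ → ℂ} (hf : Differentiable ℂ f) : Differentiable ℂ (dslope f 0) :=
    differentiableOn_univ.1 ((Complex.differentiableOn_dslope univ_mem).2 hf.differentiableOn)
  have hval {s : ℂ} (hs : s ≠ 0) : φ s = g s / S s := by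
    simp only [φ, dslope_of_ne _ hs, slope_def_field, hg0, sub_zero]
    rw [show S 0 = 0 by simp [S], sub_zero, div_div_div_cancel_right₀ hs]
  have hne (s : ℂ) (h : |s.re| < 1) : dslope S 0 s ≠ 0 := by
    by_cases hs : s = 0
    · have hd : HasDerivAt S (π : ℂ) 0 := by
        have := ((hasDerivAt_id (0 : ℂ)).const_mul (π : ℂ)).csin
        simpa using this
      rw [hs, dslope_same, hd.deriv]
      exact hπ
    · rw [dslope_of_ne _ hs, slope_def_field, show S 0 = 0 by simp [S], sub_zero, sub_zero]
      exact div_ne_zero (sin_pi_mul_ne_zero_of_abs_re_lt_one h hs) hs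
  have hφ (s : ℂ) (h : |s.re| < 1) : DifferentiableAt ℂ φ s :=
    (hdd hg s).div (hdd hS s) (hne s h)
  have hre (x y : ℝ) : ((x : ℂ) + y * Complex.I).re = x := by simp
  have him (x y : ℝ) : ((x : ℂ) + y * Complex.I).im = y := by simp
  have hright (t : ℝ) : φ ((1 / 2 : ℝ) + t * Complex.I) =
      g ((1 / 2 : ℝ) + t * Complex.I) / (cosh (π * t) : ℝ) := by
    rw [hval fun h => by simpa using congrArg Complex.re h]
    simp only [S, sin_pi_mul_half_add]
  have hleft (t : ℝ) : φ ((-(1 / 2) : ℝ) + t * Complex.I) =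
      -(g ((-(1 / 2) : ℝ) + t * Complex.I) / (cosh (π * t) : ℝ)) := by
    rw [hval fun h => by simpa using congrArg Complex.re h]
    simp only [S, sin_pi_mul_neg_half_add, div_neg]
  have hrect (T : ℝ) :
      (∫ x : ℝ in (-(1 / 2))..(1 / 2), φ (x + (-T : ℝ) * Complex.I)) -
        (∫ x : ℝ in (-(1 / 2))..(1 / 2), φ (x + T * Complex.I)) +
        Complex.I * (∫ t : ℝ in (-T)..T, φ ((1 / 2 : ℝ) + t * Complex.I)) -
        Complex.I * (∫ t : ℝ in (-T)..T, φ ((-(1 / 2) : ℝ) + t * Complex.I)) = 0 := by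
    have := Complex.integral_boundary_rect_eq_zero_of_differentiableOn φ
      ((-(1 / 2) : ℝ) + (-T : ℝ) * Complex.I) ((1 / 2 : ℝ) + T * Complex.I) ?_
    · simpa only [hre, him, smul_eq_mul] using this
    · intro s hs
      simp only [hre] at hs
      have h1 := hs.1
      simp only [Set.mem_preimage] at h1
      rw [Set.uIcc_of_le (by norm_num)] at h1
      exact (hφ s (abs_lt.2 ⟨by linarith [h1.1], by linarith [h1.2]⟩)).differentiableWithinAt
  have hhor (y x : ℝ) (hy : y ≠ 0) (hx : |x| ≤ 1 / 2) :
      ‖φ (x + y * Complex.I)‖ ≤ C * exp (b * |y|) / sinh (π * |y|) := by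
    have hs : (x : ℂ) + y * Complex.I ≠ 0 := fun h => hy (by simpa using congrArg Complex.im h)
    rw [hval hs, norm_div]
    have h1 := sinh_le_norm_sin (π * x) (π * y)
    have h2 := hbd (x + y * Complex.I) (by rwa [hre])
    rw [him] at h2
    rw [abs_mul, abs_of_pos pi_pos] at h1
    have h3 : 0 < sinh (π * |y|) := sinh_pos_iff.2 (by positivity)
    refine div_le_div₀ ((norm_nonneg _).trans h2) h2 h3 ?_
    rwa [show ((π * x : ℝ) : ℂ) + (π * y : ℝ) * Complex.I = π * (x + y * Complex.I) by
      push_cast; ring] at h1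
  have hlim : Tendsto (fun T : ℝ => C * exp (b * |T|) / sinh (π * |T|)) atTop (𝓝 0) := by
    have hk : Tendsto (fun T : ℝ => 4 * C * exp (-((π - b) * T))) atTop (𝓝 0) := by
      rw [← mul_zero (4 * C)]
      exact (tendsto_exp_neg_atTop_nhds_zero.comp
        (tendsto_id.const_mul_atTop (sub_pos.2 hb))).const_mul _
    have hC : 0 ≤ C := by
      have := (norm_nonneg _).trans (hbd 0 (by simp)); simpa using this
    refine squeeze_zero' (eventually_atTop.2 ⟨0, fun T hT => ?_⟩)
      (eventually_atTop.2 ⟨1, fun T hT => ?_⟩) hk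
    · have := sinh_nonneg_iff.2 (mul_nonneg pi_pos.le (abs_nonneg T))
      positivity
    · rw [abs_of_pos (by linarith)]
      have hpT : 1 ≤ π * T := by nlinarith [pi_gt_three]
      have h3 : 0 < sinh (π * T) := sinh_pos_iff.2 (by positivity)
      have h4 : exp (π * T) ≤ 4 * sinh (π * T) := by
        rw [sinh_eq]
        have e1 : 2 ≤ exp (π * T) := by linarith [add_one_le_exp (π * T)]
        have e2 : exp (-(π * T)) ≤ 1 := exp_le_one_iff.2 (by linarith)
        linarith
      rw [div_le_iff₀ h3]
      calc C * exp (b * T) = C * exp (-((π - b) * T)) * exp (π * T) := by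
            rw [mul_assoc, ← exp_add, show -((π - b) * T) + π * T = b * T by ring]
        _ ≤ C * exp (-((π - b) * T)) * (4 * sinh (π * T)) := by gcongr
        _ = _ := by ring
  have hedge (σ : ℝ) (hσ : |σ| = 1) : Tendsto
      (fun T : ℝ => ∫ x : ℝ in (-(1 / 2))..(1 / 2), φ (x + (σ * T : ℝ) * Complex.I))
      atTop (𝓝 0) := by
    refine squeeze_zero_norm' (eventually_atTop.2 ⟨1, fun T hT => ?_⟩) hlim
    have hT' : σ * T ≠ 0 := mul_ne_zero (fun h => by simp [h] at hσ) (by linarith)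
    have := intervalIntegral.norm_integral_le_of_norm_le_const
      (f := fun x : ℝ => φ (x + (σ * T : ℝ) * Complex.I)) (a := -(1 / 2)) (b := 1 / 2)
      (C := C * exp (b * |T|) / sinh (π * |T|)) ?_
    · refine this.trans_eq ?_
      norm_num
    · intro x hx
      rw [Set.uIoc_of_le (by norm_num)] at hx
      have := hhor (σ * T) x hT' (abs_le.2 ⟨hx.1.le, hx.2⟩)
      rwa [abs_mul, hσ, one_mul] at this
  have hline (σ : ℝ) (hσ : |σ| ≤ 1 / 2) : MeasureTheory.Integrable
      fun t : ℝ => g (σ + t * Complex.I) / (cosh (π * t) : ℝ) := by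
    refine integrable_div_cosh (hg.continuous.comp (by fun_prop)) (C := C) hb fun t => ?_
    have := hbd (σ + t * Complex.I) (by rwa [hre])
    rwa [him] at this
  have hvert (σ : ℝ) (hσ : |σ| ≤ 1 / 2) := MeasureTheory.intervalIntegral_tendsto_integral
    (hline σ hσ) tendsto_neg_atTop_atBot tendsto_id
  have htot := (((hedge (-1) (by norm_num)).sub (hedge 1 (by norm_num))).add
    ((hvert (1 / 2) (by norm_num [abs_of_pos])).const_mul Complex.I)).add
    ((hvert (-(1 / 2)) (by norm_num [abs_of_pos])).const_mul Complex.I)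
  have hzero := tendsto_nhds_unique htot (tendsto_const_nhds.congr fun T => ?_) (b := 0)
  · rw [sub_zero, zero_add, ← mul_add] at hzero
    exact (mul_eq_zero.1 hzero).resolve_left Complex.I_ne_zero
  · have := hrect T
    simp only [hright, hleft, intervalIntegral.integral_neg] at this
    rw [← this]
    simp only [neg_mul, one_mul, id]
    ring

/-- Mean value property on the strip `|Re s| ≤ 1/2`, with respect to the Poisson kernel. -/
theorem integral_strip_div_cosh {g : ℂ → ℂ} (hg : Differentiable ℂ g) {C b : ℝ} (hb0 : 0 ≤ b)
    (hb : b < π) (hbd : ∀ s : ℂ, |s.re| ≤ 1 / 2 → ‖g s‖ ≤ C * exp (b * |s.im|)) :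
    (∫ t : ℝ, g ((1 / 2 : ℝ) + t * Complex.I) / (cosh (π * t) : ℝ)) +
      ∫ t : ℝ, g ((-(1 / 2) : ℝ) + t * Complex.I) / (cosh (π * t) : ℝ) = 2 * g 0 := by
  have hbd' (s : ℂ) (hs : |s.re| ≤ 1 / 2) : ‖g s - g 0‖ ≤ (C + ‖g 0‖) * exp (b * |s.im|) := by
    have h1 : 1 ≤ exp (b * |s.im|) := one_le_exp (by positivity)
    have h2 := hbd s hs
    have h3 := norm_sub_le (g s) (g 0)
    nlinarith [norm_nonneg (g 0)]
  have h := integral_strip_div_cosh_eq_zero (hg.sub_const (g 0)) (sub_self _) hb hbd'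
  have hline (σ : ℝ) (hσ : |σ| ≤ 1 / 2) :
      ∫ t : ℝ, (g (σ + t * Complex.I) - g 0) / (cosh (π * t) : ℝ) =
        (∫ t : ℝ, g (σ + t * Complex.I) / (cosh (π * t) : ℝ)) - g 0 := by
    have hi : MeasureTheory.Integrable
        fun t : ℝ => g (σ + t * Complex.I) / (cosh (π * t) : ℝ) := by
      refine integrable_div_cosh (hg.continuous.comp (by fun_prop)) (C := C) hb fun t => ?_
      have := hbd (σ + t * Complex.I) (by simpa using hσ)
      simpa using this
    have hc : MeasureTheory.Integrable fun t : ℝ => g 0 / (cosh (π * t) : ℝ) :=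
      integrable_div_cosh (C := ‖g 0‖) continuous_const pi_pos fun t => by simp
    simp only [sub_div]
    rw [MeasureTheory.integral_sub hi hc]
    congr 1
    simp only [div_eq_mul_inv]
    rw [MeasureTheory.integral_const_mul]
    simp only [← Complex.ofReal_inv]
    rw [integral_complex_ofReal, integral_inv_cosh]
    simp
  rw [hline _ (by norm_num [abs_of_pos]), hline _ (by norm_num [abs_of_pos])] at h
  linear_combination h

theorem norm_inv_Gamma_le {z : ℂ} (hz : -2 ≤ z.re) :
    ‖(Complex.Gamma z)⁻¹‖ ≤
      exp 1 * (‖z‖ * ‖z + 1‖ * ‖z + 2‖) * exp (π * |z.im|) := by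
  have h1 : (Complex.Gamma z)⁻¹ = z * (z + 1) * (z + 2) * (Complex.Gamma (z + 3))⁻¹ := by
    rw [Complex.one_div_Gamma_eq_self_mul_one_div_Gamma_add_one z,
      Complex.one_div_Gamma_eq_self_mul_one_div_Gamma_add_one (z + 1),
      Complex.one_div_Gamma_eq_self_mul_one_div_Gamma_add_one (z + 1 + 1)]
    ring_nf
  have h2 := Gamma_le_norm_Gamma_mul_exp (a := z.re + 3) (by linarith) z.im
  have h3 : (((z.re + 3 : ℝ) : ℂ) + z.im * Complex.I) = z + 3 := by
    apply Complex.ext <;> simp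
  rw [h3] at h2
  have h4 := rpow_mul_exp_neg_le_Gamma_one_add one_pos (s := z.re + 2) (by linarith)
  rw [one_rpow, one_mul, show 1 + (z.re + 2) = z.re + 3 by ring] at h4
  have h5 : 0 < ‖Complex.Gamma (z + 3)‖ :=
    pos_of_mul_pos_left ((exp_pos _).trans_le (h4.trans h2)) (exp_pos _).le
  have h6 : ‖Complex.Gamma (z + 3)‖⁻¹ ≤ exp 1 * exp (π * |z.im|) := by
    rw [inv_le_iff_one_le_mul₀ h5]
    have : exp 1 * exp (-1) = 1 := by rw [← exp_add]; simp
    nlinarith [exp_pos 1, h4.trans h2]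
  rw [h1, norm_mul, norm_mul, norm_mul, norm_inv]
  calc _ ≤ ‖z‖ * ‖z + 1‖ * ‖z + 2‖ * (exp 1 * exp (π * |z.im|)) := by gcongr
    _ = _ := by ring

theorem exists_norm_inv_Gamma_one_sub_le {α : ℝ} (hα : 0 < α) (hα1 : α < 1) (M : ℝ) :
    ∃ C b : ℝ, 0 ≤ C ∧ 0 ≤ b ∧ b < π ∧ ∀ s : ℂ, s.re ≤ 5 / 2 → |s.re| ≤ M →
      ‖(Complex.Gamma (1 - α * s))⁻¹‖ ≤ C * exp (b * |s.im|) := by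
  set ε : ℝ := π * (1 - α) / 6
  have hε : 0 < ε := div_pos (mul_pos pi_pos (sub_pos.2 hα1)) (by norm_num)
  refine ⟨exp 1 * (ε⁻¹ * exp (ε * (M + 3))) ^ 3, π * (1 + α) / 2, by positivity, by positivity,
    by nlinarith [pi_pos], fun s hs hM => ?_⟩
  have hre : (1 - α * s : ℂ).re = 1 - α * s.re := by simp
  have him : |(1 - α * s : ℂ).im| = α * |s.im| := by simp [abs_mul, abs_of_pos hα]
  have h := norm_inv_Gamma_le (z := 1 - α * s) (by rw [hre]; nlinarith)
  rw [him] at h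
  have hs' : ‖s‖ ≤ M + |s.im| := (Complex.norm_le_abs_re_add_abs_im s).trans (by gcongr)
  have hfac (w : ℂ) (hw : ‖w‖ ≤ 3) :
      ‖w - α * s‖ ≤ ε⁻¹ * exp (ε * (M + 3)) * exp (ε * |s.im|) := by
    have h1 : ‖w - α * s‖ ≤ M + 3 + |s.im| := by
      refine (norm_sub_le _ _).trans ?_
      rw [norm_mul, Complex.norm_real, norm_of_nonneg hα.le]
      nlinarith [norm_nonneg s]
    have h2 := add_one_le_exp (ε * (M + 3 + |s.im|))
    rw [mul_assoc, ← exp_add, ← mul_add]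
    refine h1.trans ?_
    rw [le_inv_mul_iff₀ hε]
    linarith
  have f0 := hfac 1 (by norm_num)
  have f1 := hfac 2 (by norm_num)
  have f2 := hfac 3 (by norm_num)
  rw [show (1 - α * s + 1 : ℂ) = 2 - α * s by ring,
    show (1 - α * s + 2 : ℂ) = 3 - α * s by ring] at h
  refine h.trans ?_
  set K := ε⁻¹ * exp (ε * (M + 3))
  calc _ ≤ exp 1 * ((K * exp (ε * |s.im|)) * (K * exp (ε * |s.im|)) * (K * exp (ε * |s.im|))) *
        exp (π * (α * |s.im|)) := by gcongr
    _ = exp 1 * K ^ 3 * (exp (ε * |s.im|) * exp (ε * |s.im|) * exp (ε * |s.im|) *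
        exp (π * (α * |s.im|))) := by ring
    _ = _ := by
      rw [← exp_add, ← exp_add, ← exp_add]
      congr 2
      simp only [ε]
      ring

theorem norm_inv_Gamma_one_add_le {A a : ℝ} (hA : 0 < A) (ha : 0 ≤ a) (y : ℝ) :
    ‖(Complex.Gamma ((1 + a : ℝ) + y * Complex.I))⁻¹‖ ≤ exp A * (A ^ a)⁻¹ * exp (π * |y|) := by
  have h1 := rpow_mul_exp_neg_le_Gamma_one_add hA ha
  have h2 := Gamma_le_norm_Gamma_mul_exp (a := 1 + a) (by linarith) y
  have hp : 0 < A ^ a := rpow_pos_of_pos hA a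
  have h3 : 0 < ‖Complex.Gamma ((1 + a : ℝ) + y * Complex.I)‖ :=
    pos_of_mul_pos_left ((mul_pos hp (exp_pos _)).trans_le (h1.trans h2)) (exp_pos _).le
  rw [norm_inv, inv_le_iff_one_le_mul₀ h3]
  calc 1 = exp A * (A ^ a)⁻¹ * (A ^ a * exp (-A)) := by
        rw [exp_neg]; field_simp
    _ ≤ exp A * (A ^ a)⁻¹ * (‖Complex.Gamma ((1 + a : ℝ) + y * Complex.I)‖ * exp (π * |y|)) := by
        exact mul_le_mul_of_nonneg_left (h1.trans h2) (by positivity)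
    _ = _ := by ring

/-- The entire function interpolating the coefficients of the series and of the asymptotic
expansion of the Mittag-Leffler function. -/
noncomputable def mittagLefflerCoeff (α x : ℝ) (s : ℂ) : ℂ :=
  (x : ℂ) ^ (-s) * (Complex.Gamma (1 - α * s))⁻¹

/-- The Mellin–Barnes integral of `mittagLefflerCoeff` along the line `Re s = c`, where
`c ∈ ℤ + 1/2`. -/
noncomputable def mellinBarnes (α x c : ℝ) : ℂ :=
  ∫ t : ℝ, mittagLefflerCoeff α x (c + t * Complex.I) / (cosh (π * t) : ℝ)

theorem differentiable_mittagLefflerCoeff (α : ℝ) {x : ℝ} (hx : 0 < x) :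
    Differentiable ℂ (mittagLefflerCoeff α x) := by
  have hx' : (x : ℂ) ≠ 0 := by exact_mod_cast hx.ne'
  have h1 : Differentiable ℂ fun s : ℂ => (x : ℂ) ^ (-s) := fun s =>
    (differentiable_neg s).const_cpow (Or.inl hx')
  have h2 : Differentiable ℂ fun s : ℂ => 1 - α * s := by fun_prop
  exact h1.mul (Complex.differentiable_one_div_Gamma.comp h2)

theorem norm_mittagLefflerCoeff (α : ℝ) {x : ℝ} (hx : 0 < x) (s : ℂ) :
    ‖mittagLefflerCoeff α x s‖ = x ^ (-s.re) * ‖(Complex.Gamma (1 - α * s))⁻¹‖ := by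
  rw [mittagLefflerCoeff, norm_mul, Complex.norm_cpow_eq_rpow_re_of_pos hx, Complex.neg_re]

theorem mellinBarnes_add {α x : ℝ} (hα : 0 < α) (hα1 : α < 1) (hx : 1 ≤ x) {c : ℝ} (hc : c ≤ 2) :
    mellinBarnes α x (c + 1 / 2) + mellinBarnes α x (c - 1 / 2) =
      2 * mittagLefflerCoeff α x c := by
  obtain ⟨C, b, hC, hb0, hb, h⟩ := exists_norm_inv_Gamma_one_sub_le hα hα1 (|c| + 1 / 2)
  have hx0 : 0 < x := by linarith
  have key := integral_strip_div_cosh (g := fun s => mittagLefflerCoeff α x (c + s))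
    (C := x ^ (1 / 2 - c) * C)
    ((differentiable_mittagLefflerCoeff α hx0).comp (by fun_prop)) hb0 hb ?_
  · simp only [add_zero] at key
    rw [← key, mellinBarnes, mellinBarnes]
    congr 2 <;> · ext t; congr 2; push_cast; ring
  · intro s hs
    have hre : ((c : ℂ) + s).re = c + s.re := by simp
    have him : ((c : ℂ) + s).im = s.im := by simp
    have hs2 := abs_le.1 hs
    have h1 := h (c + s) (by rw [hre]; linarith [hs2.2])
      (by rw [hre]; exact (abs_add_le _ _).trans (by gcongr))
    rw [him] at h1
    rw [norm_mittagLefflerCoeff α hx0, hre, mul_assoc]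
    gcongr
    linarith [hs2.1]

theorem exists_norm_mellinBarnes_le {α : ℝ} (hα : 0 < α) (hα1 : α < 1) :
    ∃ C : ℝ, 0 ≤ C ∧ ∀ x : ℝ, 1 ≤ x → ‖mellinBarnes α x (5 / 2)‖ ≤ C / x ^ 2 := by
  obtain ⟨C, b, hC, hb0, hb, h⟩ := exists_norm_inv_Gamma_one_sub_le hα hα1 (5 / 2)
  refine ⟨C * ∫ t : ℝ, exp (b * |t|) / cosh (π * t), mul_nonneg hC
    (MeasureTheory.integral_nonneg fun t => div_nonneg (exp_pos _).le (cosh_pos _).le),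
    fun x hx => ?_⟩
  have hx0 : 0 < x := by linarith
  have := norm_integral_div_cosh_le
    (f := fun t => mittagLefflerCoeff α x ((5 / 2 : ℝ) + t * Complex.I))
    (C := (x ^ 2)⁻¹ * C) hb fun t => ?_
  · refine this.trans_eq ?_
    ring
  · rw [norm_mittagLefflerCoeff α hx0, mul_assoc]
    have hre : (((5 / 2 : ℝ) : ℂ) + t * Complex.I).re = 5 / 2 := by simp
    have him : (((5 / 2 : ℝ) : ℂ) + t * Complex.I).im = t := by simp
    have h1 := h ((5 / 2 : ℝ) + t * Complex.I) hre.le (by rw [hre]; norm_num [abs_of_pos])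
    rw [him] at h1
    rw [hre]
    gcongr
    rw [rpow_neg hx0.le]
    gcongr
    rw [← rpow_natCast]
    exact rpow_le_rpow_of_exponent_le hx (by norm_num)

open Filter Topology in
theorem tendsto_mellinBarnes_neg {α x : ℝ} (hα : 0 < α) (hα1 : α < 1) (hx : 0 < x) :
    Tendsto (fun n : ℕ => mellinBarnes α x (-n + 1 / 2)) atTop (𝓝 0) := by
  rw [← tendsto_add_atTop_iff_nat 1]
  set A : ℝ := (2 * x) ^ α⁻¹
  have hA : 0 < A := rpow_pos_of_pos (by positivity) _
  have hb : π * α < π := by nlinarith [pi_pos]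
  set I := ∫ t : ℝ, exp (π * α * |t|) / cosh (π * t)
  have hbound (n : ℕ) : ‖mellinBarnes α x (-(n + 1 : ℕ) + 1 / 2)‖ ≤
      exp A * I * (2 : ℝ) ^ (-(1 / 2) : ℝ) * (1 / 2) ^ n := by
    set d : ℝ := n + 1 / 2
    have hd : 0 ≤ d := by positivity
    have := norm_integral_div_cosh_le (b := π * α)
      (f := fun t => mittagLefflerCoeff α x ((-(n + 1 : ℕ) + 1 / 2 : ℝ) + t * Complex.I))
      (C := exp A * (2 : ℝ) ^ (-d)) hb fun t => ?_
    · refine this.trans_eq ?_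
      have : (2 : ℝ) ^ (-d) = (2 : ℝ) ^ (-(1 / 2) : ℝ) * (1 / 2) ^ n := by
        rw [show -d = -(1 / 2) + -(n : ℝ) by simp only [d]; ring, rpow_add two_pos,
          rpow_neg two_pos.le (n : ℝ), rpow_natCast, one_div_pow, one_div (2 ^ n)]
      rw [this]
      ring
    · have hc : (-(n + 1 : ℕ) + 1 / 2 : ℝ) = -d := by simp only [d]; push_cast; ring
      have h1 := norm_inv_Gamma_one_add_le hA (a := α * d) (by positivity) (-(α * t))
      have hz : ((1 + α * d : ℝ) : ℂ) + (-(α * t) : ℝ) * Complex.I =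
          1 - α * ((-d : ℝ) + t * Complex.I) := by push_cast; ring
      rw [hz, abs_neg, abs_mul, abs_of_pos hα] at h1
      rw [hc, norm_mittagLefflerCoeff α hx]
      have hre : (((-d : ℝ) : ℂ) + t * Complex.I).re = -d := by simp
      have hAd : A ^ (α * d) = 2 ^ d * x ^ d := by
        rw [rpow_mul hA.le, ← rpow_mul (by positivity : 0 ≤ 2 * x), inv_mul_cancel₀ hα.ne',
          rpow_one, mul_rpow two_pos.le hx.le]
      rw [hre, neg_neg]
      calc _ ≤ x ^ d * (exp A * (A ^ (α * d))⁻¹ * exp (π * (α * |t|))) := by gcongr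
        _ = _ := by
          rw [hAd, rpow_neg two_pos.le, mul_assoc π α]
          have := rpow_pos_of_pos hx d
          field_simp
  refine squeeze_zero_norm hbound ?_
  rw [← mul_zero (exp A * I * (2 : ℝ) ^ (-(1 / 2) : ℝ))]
  exact (tendsto_pow_atTop_nhds_zero_of_lt_one (by norm_num) (by norm_num)).const_mul _

theorem mittagLefflerCoeff_neg_natCast (α x : ℝ) (n : ℕ) :
    mittagLefflerCoeff α x (-n : ℝ) = (x ^ n / Gamma (1 + n * α) : ℝ) := by
  rw [mittagLefflerCoeff, show (1 : ℂ) - α * (-n : ℝ) = (1 + n * α : ℝ) by push_cast; ring,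
    Complex.Gamma_ofReal]
  push_cast
  rw [neg_neg, Complex.cpow_natCast, div_eq_mul_inv]

theorem mittagLefflerCoeff_natCast (α x : ℝ) (n : ℕ) :
    mittagLefflerCoeff α x (n : ℝ) = ((x ^ n)⁻¹ * (Gamma (1 - n * α))⁻¹ : ℝ) := by
  rw [mittagLefflerCoeff, show (1 : ℂ) - α * (n : ℝ) = (1 - n * α : ℝ) by push_cast; ring,
    Complex.Gamma_ofReal]
  push_cast
  rw [Complex.cpow_neg, Complex.cpow_natCast]

theorem summable_mittagLeffler {α : ℝ} (hα : 0 < α) (r : ℝ) :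
    Summable fun k : ℕ => r ^ k / Gamma (1 + k * α) := by
  set B : ℝ := 2 * (|r| + 1)
  have hB : 0 < B := by positivity
  set A : ℝ := B ^ α⁻¹
  have hA : 0 < A := rpow_pos_of_pos hB _
  refine Summable.of_norm_bounded (summable_geometric_two.mul_left (exp A)) fun k => ?_
  have h := rpow_mul_exp_neg_le_Gamma_one_add hA (s := k * α) (by positivity)
  have hAk : A ^ (k * α) = B ^ k := by
    rw [← rpow_mul hB.le, mul_comm, mul_assoc, mul_inv_cancel₀ hα.ne', mul_one, rpow_natCast]
  rw [hAk] at h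
  have hG : 0 < Gamma (1 + k * α) := Gamma_pos_of_pos (by positivity)
  rw [norm_div, norm_pow, norm_of_nonneg hG.le, norm_eq_abs, div_le_iff₀ hG]
  calc |r| ^ k ≤ (|r| + 1) ^ k := by gcongr; linarith
    _ = exp A * (1 / 2) ^ k * (B ^ k * exp (-A)) := by
      simp only [B]
      rw [mul_pow, exp_neg, one_div_pow]
      field_simp
    _ ≤ _ := by gcongr

open Filter Topology in
theorem two_mul_mittagLeffler_neg {α x : ℝ} (hα : 0 < α) (hα1 : α < 1) (hx : 1 ≤ x) :
    ((2 * mittagLeffler α (-x) : ℝ) : ℂ) = mellinBarnes α x (1 / 2) := by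
  have hpart (n : ℕ) :
      ((2 * ∑ k ∈ Finset.range n, (-x) ^ k / Gamma (1 + k * α) : ℝ) : ℂ) =
        mellinBarnes α x (1 / 2) - (-1) ^ n * mellinBarnes α x (-n + 1 / 2) := by
    induction n with
    | zero => simp
    | succ n ih =>
      have h := mellinBarnes_add hα hα1 hx (c := -n)
        (by linarith [(n.cast_nonneg : (0 : ℝ) ≤ n)])
      rw [mittagLefflerCoeff_neg_natCast] at h
      rw [Finset.sum_range_succ, mul_add, Complex.ofReal_add, ih]
      have hc : (-((n + 1 : ℕ) : ℝ) + 1 / 2) = -n - 1 / 2 := by push_cast; ring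
      rw [hc, neg_pow]
      push_cast at h ⊢
      linear_combination -(-1) ^ n * h
  have hsum := (summable_mittagLeffler hα (-x)).hasSum.tendsto_sum_nat
  have h1 := ((Complex.continuous_ofReal.tendsto _).comp (hsum.const_mul 2))
  refine tendsto_nhds_unique h1 ?_
  have h2 : Tendsto (fun n : ℕ => (-1 : ℂ) ^ n * mellinBarnes α x (-n + 1 / 2)) atTop (𝓝 0) := by
    refine squeeze_zero_norm (fun n => ?_)
      (tendsto_zero_iff_norm_tendsto_zero.1 (tendsto_mellinBarnes_neg hα hα1 (by linarith)))
    simp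
  have h3 := h2.const_sub (mellinBarnes α x (1 / 2))
  rw [sub_zero] at h3
  exact h3.congr fun n => (hpart n).symm

theorem mittagLeffler_asymp_bot (α : ℝ) (hα : 0 < α) (hα1 : α < 1) :
    ∃ C > (0 : ℝ), ∃ R > (0 : ℝ), ∀ r : ℝ, r ≤ -R →
      |mittagLeffler α r + 1 / (Real.Gamma (1 - α) * r)| ≤ C / r ^ 2 := by
  obtain ⟨C, hC, hJ⟩ := exists_norm_mellinBarnes_le hα hα1
  refine ⟨|(Gamma (1 - 2 * α))⁻¹| + C + 1, by positivity, 1, one_pos, fun r hr => ?_⟩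
  obtain ⟨x, rfl⟩ : ∃ x, r = -x := ⟨-r, by ring⟩
  have hx : 1 ≤ x := by linarith
  have hx0 : 0 < x := by linarith
  have h0 := two_mul_mittagLeffler_neg hα hα1 hx
  have h1 := mellinBarnes_add hα hα1 hx (c := (1 : ℕ)) (by norm_num)
  have h2 := mellinBarnes_add hα hα1 hx (c := (2 : ℕ)) (by norm_num)
  rw [mittagLefflerCoeff_natCast] at h1 h2
  norm_num at h1 h2
  have hΓ : Gamma (1 - α) ≠ 0 := (Gamma_pos_of_pos (by linarith)).ne'
  have key : ((mittagLeffler α (-x) + 1 / (Gamma (1 - α) * -x) : ℝ) : ℂ) =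
      ((-((x ^ 2)⁻¹ * (Gamma (1 - 2 * α))⁻¹) : ℝ) : ℂ) + mellinBarnes α x (5 / 2) / 2 := by
    have h3 : 1 / (Gamma (1 - α) * -x) = -(x⁻¹ * (Gamma (1 - α))⁻¹) := by field_simp
    rw [h3]
    push_cast at h0 ⊢
    linear_combination h0 / 2 + h1 / 2 - h2 / 2
  rw [← norm_eq_abs, ← Complex.norm_real, key]
  refine (norm_add_le _ _).trans ?_
  rw [Complex.norm_real, norm_neg, norm_mul, norm_div, norm_eq_abs (Gamma _)⁻¹,
    norm_of_nonneg (by positivity : 0 ≤ (x ^ 2)⁻¹), neg_sq]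
  have := hJ x hx
  rw [add_div, add_div, div_eq_inv_mul |_|]
  have h4 : 0 ≤ 1 / x ^ 2 := by positivity
  have h5 : ‖(2 : ℂ)‖ = 2 := by norm_num
  rw [h5]
  linarith [norm_nonneg (mellinBarnes α x (5 / 2))]
end

section
/- Let 1/2 ≤ α ≤ 1 and r ≥ 0. Then E_α(r) ≤ E_{α,α}(r) + 1 − 1/Γ(α) + (1/Γ(1+α) − 1/Γ(2α))·r. -/
open Real

/-- The derivative of `Γ` at `3 / 2` is positive: its value is `√π (1 - γ / 2 - log 2)`. -/
theorem Real.exists_hasDerivAt_Gamma_three_halves_pos :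
    ∃ d : ℝ, 0 < d ∧ HasDerivAt Real.Gamma d (3 / 2) := by
  have hγ : eulerMascheroniConstant < eulerMascheroniSeq' 16 :=
    eulerMascheroniConstant_lt_eulerMascheroniSeq' 16
  have hlog : Real.log 16 = 4 * Real.log 2 := by
    rw [show (16 : ℝ) = 2 ^ 4 by norm_num, Real.log_pow]; norm_num
  have hseq : eulerMascheroniSeq' 16 = (harmonic 16 : ℝ) - 4 * Real.log 2 := by
    rw [← hlog]; simp [eulerMascheroniSeq']
  have hh : (harmonic 16 : ℝ) < 3.381 := by norm_num [harmonic, Finset.sum_range_succ]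
  have hl := Real.log_two_gt_d9
  have hπ : 0 < √π := Real.sqrt_pos.mpr Real.pi_pos
  have h1 : HasDerivAt Real.Gamma (-√π * (eulerMascheroniConstant + 2 * Real.log 2))
      (3 / 2 - 1) := by
    rw [show (3 / 2 - 1 : ℝ) = 1 / 2 by norm_num]; exact Real.hasDerivAt_Gamma_one_half
  have h2 := (hasDerivAt_id' (3 / 2 : ℝ)).sub_const 1 |>.mul
    (h1.comp (3 / 2 : ℝ) ((hasDerivAt_id' (3 / 2 : ℝ)).sub_const 1))
  refine ⟨_, ?_, h2.congr_of_eventuallyEq ?_⟩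
  · simp only [Function.comp]
    rw [show (3 / 2 - 1 : ℝ) = 1 / 2 by norm_num, Real.Gamma_one_half_eq]
    have : 0 < √π * (1 - eulerMascheroniConstant / 2 - Real.log 2) := by
      refine mul_pos hπ ?_
      rw [hseq] at hγ
      linarith
    linarith
  · filter_upwards [lt_mem_nhds (show (1 : ℝ) < 3 / 2 by norm_num)] with x hx
    have := Real.Gamma_add_one (s := x - 1) (by linarith)
    simpa using this

theorem Real.Gamma_monotoneOn_Ici_three_halves : MonotoneOn Real.Gamma (Set.Ici (3 / 2)) := by
  obtain ⟨d, hd, hder⟩ := Real.exists_hasDerivAt_Gamma_three_halves_pos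
  intro x hx y _ hxy
  simp only [Set.mem_Ici] at hx
  have hmem : (3 / 2 : ℝ) ∈ Set.Ioi (0 : ℝ) := by norm_num [Set.mem_Ioi]
  have hbase : ∀ z : ℝ, 3 / 2 < z → 0 < (Real.Gamma z - Real.Gamma (3 / 2)) / (z - 3 / 2) := by
    intro z hz
    have := Real.convexOn_Gamma.le_slope_of_hasDerivAt hmem
      (Set.mem_Ioi.mpr (by linarith : (0 : ℝ) < z)) hz hder
    rw [slope_def_field] at this
    linarith
  rcases hxy.eq_or_lt with rfl | hlt
  · rfl
  have key : 0 < (Real.Gamma y - Real.Gamma x) / (y - x) := by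
    rcases hx.eq_or_lt with rfl | hx
    · exact hbase y hlt
    · exact (hbase x hx).trans_le (Real.convexOn_Gamma.slope_mono_adjacent hmem
        (Set.mem_Ioi.mpr (by linarith : (0 : ℝ) < y)) hx hlt)
  have := (div_pos_iff_of_pos_right (sub_pos.mpr hlt)).mp key
  linarith

theorem Real.summable_pow_div_Gamma_natCast_add {c : ℝ} (hc : 0 < c) (q : ℝ) :
    Summable fun m : ℕ => q ^ m / Real.Gamma (m + c) := by
  obtain ⟨N, hN⟩ := exists_nat_gt (2 * |q|)
  refine summable_of_ratio_norm_eventually_le (r := 1 / 2) (by norm_num) ?_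
  filter_upwards [Filter.eventually_ge_atTop N] with m hm
  have hm' : (N : ℝ) ≤ m := by exact_mod_cast hm
  have hpos : 0 < (m : ℝ) + c := by positivity
  have hΓ := Real.Gamma_pos_of_pos hpos
  have hrec : Real.Gamma ((m + 1 : ℕ) + c) = (m + c) * Real.Gamma (m + c) := by
    rw [← Real.Gamma_add_one hpos.ne']; push_cast; ring_nf
  rw [hrec, norm_div, norm_div, norm_pow, norm_pow, norm_mul, Real.norm_of_nonneg hΓ.le,
    Real.norm_of_nonneg hpos.le, pow_succ, Real.norm_eq_abs]
  have : |q| ^ m * |q| / ((m + c) * Real.Gamma (m + c))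
      = |q| / (m + c) * (|q| ^ m / Real.Gamma (m + c)) := by field_simp
  rw [this]
  refine mul_le_mul_of_nonneg_right ?_ (by positivity)
  rw [div_le_div_iff₀ hpos (by norm_num)]
  linarith

theorem Real.summable_pow_div_Gamma_half (r : ℝ) :
    Summable fun k : ℕ => r ^ k / Real.Gamma ((k + 1) / 2) := by
  have he := Real.summable_pow_div_Gamma_natCast_add (c := 1 / 2) (by norm_num) (r ^ 2)
  have ho := (Real.summable_pow_div_Gamma_natCast_add (c := 1) one_pos (r ^ 2)).mul_left r
  refine Summable.even_add_odd (he.congr fun m => ?_) (ho.congr fun m => ?_)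
  · rw [← pow_mul]; push_cast; congr 2; ring
  · rw [← pow_mul, ← mul_div_assoc, ← pow_succ']; push_cast; congr 2; ring

theorem mittagLeffler_le (α r : ℝ) (hα : 1 / 2 ≤ α) (hα1 : α ≤ 1) (hr : 0 ≤ r) :
    mittagLeffler α r ≤ mittagLefflerAA α r + 1 - 1 / Real.Gamma α +
      (1 / Real.Gamma (1 + α) - 1 / Real.Gamma (2 * α)) * r := by
  have harg : ∀ k : ℕ, (3 / 2 : ℝ) ≤ ((k + 2 : ℕ) + 1) / 2 := by
    intro k; push_cast; linarith [k.cast_nonneg (α := ℝ)]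
  have hle : ∀ k : ℕ, (((k + 2 : ℕ) : ℝ) + 1) / 2 ≤ α + (k + 2 : ℕ) * α := by
    intro k; nlinarith [(k + 2).cast_nonneg (α := ℝ)]
  have hmono : ∀ {x y : ℝ}, 3 / 2 ≤ x → x ≤ y → ∀ n : ℕ,
      r ^ n / Real.Gamma y ≤ r ^ n / Real.Gamma x := by
    intro x y hx hxy n
    have := Real.Gamma_pos_of_pos (show 0 < x by linarith)
    gcongr
    exact Real.Gamma_monotoneOn_Ici_three_halves hx (hx.trans hxy) hxy
  have hterm : ∀ k : ℕ, r ^ (k + 2) / Real.Gamma (1 + (k + 2 : ℕ) * α) ≤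
      r ^ (k + 2) / Real.Gamma (α + (k + 2 : ℕ) * α) := fun k =>
    hmono ((harg k).trans (hle k)) (by linarith) _
  have hnonneg : ∀ {c : ℝ}, 0 < c → ∀ k : ℕ, 0 ≤ r ^ k / Real.Gamma (c + k * α) := by
    intro c hc k
    have := Real.Gamma_pos_of_pos (show 0 < c + k * α by positivity)
    positivity
  have hsAA' : Summable fun k : ℕ => r ^ (k + 2) / Real.Gamma (α + (k + 2 : ℕ) * α) :=
    Summable.of_nonneg_of_le (fun k => hnonneg (by linarith) (k + 2))
      (fun k => hmono (harg k) (hle k) _)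
      ((summable_nat_add_iff 2).mpr (Real.summable_pow_div_Gamma_half r))
  have hs' : Summable fun k : ℕ => r ^ (k + 2) / Real.Gamma (1 + (k + 2 : ℕ) * α) :=
    Summable.of_nonneg_of_le (fun k => hnonneg one_pos (k + 2)) hterm hsAA'
  have hsAA : Summable fun k : ℕ => r ^ k / Real.Gamma (α + k * α) :=
    (summable_nat_add_iff 2).mp hsAA'
  have hs : Summable fun k : ℕ => r ^ k / Real.Gamma (1 + k * α) :=
    (summable_nat_add_iff 2).mp hs'
  have htail := hs'.tsum_le_tsum hterm hsAA'
  rw [mittagLeffler, mittagLefflerAA, ← hs.sum_add_tsum_nat_add 2, ← hsAA.sum_add_tsum_nat_add 2]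
  simp only [Finset.sum_range_succ, Finset.sum_range_zero, pow_zero, pow_one, Nat.cast_zero,
    Nat.cast_one, zero_mul, one_mul, add_zero, zero_add, Real.Gamma_one, ← two_mul]
  have e : ∀ x : ℝ, r / x = 1 / x * r := fun x => by ring
  rw [e (Real.Gamma (1 + α)), e (Real.Gamma (2 * α))]
  linarith
end

section
/- Let 0 < α < 1, t > 0 and x > 0. Then for every integer k ≥ 1 one has a_{k+1}(x,t) < a_k(x,t). -/
open Real MeasureTheory

/-- The coefficients `a_k(x,t)` obtained by splitting the Fourier integral of the
fundamental solution over the intervals where `cos (xξ)` has a fixed sign. -/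
noncomputable def aCoeff (α t x : ℝ) (k : ℕ) : ℝ :=
  if k = 0 then
    ∫ ξ in (0 : ℝ)..(π / (2 * x)),
      mittagLeffler α ((1 - ξ ^ 2) * t ^ α) * Real.cos (x * ξ)
  else
    (-1 : ℝ) ^ k *
      ∫ ξ in (π * (2 * (k : ℝ) - 1) / (2 * x))..(π * (2 * (k : ℝ) + 1) / (2 * x)),
        mittagLeffler α ((1 - ξ ^ 2) * t ^ α) * Real.cos (x * ξ)

lemma rpow_mul_exp_neg_le_Gamma {M s : ℝ} (hM : 0 < M) (hs : 1 ≤ s) :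
    M ^ (s - 1) * exp (-M) ≤ Real.Gamma s := by
  have hGint := Real.GammaIntegral_convergent (zero_lt_one.trans_le hs)
  rw [Real.Gamma_eq_integral (zero_lt_one.trans_le hs), ← integral_exp_neg_Ioi M,
    ← integral_const_mul]
  calc ∫ x in Set.Ioi M, M ^ (s - 1) * exp (-x)
      ≤ ∫ x in Set.Ioi M, exp (-x) * x ^ (s - 1) := by
        refine setIntegral_mono_on ((integrableOn_exp_neg_Ioi M).const_mul _)
          (hGint.mono_set (Set.Ioi_subset_Ioi hM.le)) measurableSet_Ioi fun x hx => ?_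
        rw [mul_comm]
        gcongr
        exact (Set.mem_Ioi.1 hx).le
    _ ≤ ∫ x in Set.Ioi 0, exp (-x) * x ^ (s - 1) := by
        refine setIntegral_mono_set hGint ?_ (Set.Ioi_subset_Ioi hM.le).eventuallyLE
        filter_upwards [ae_restrict_mem measurableSet_Ioi] with x hx
        have := Set.mem_Ioi.1 hx
        positivity

lemma summable_inv_Gamma_mul_pow {α β : ℝ} (hα : 0 < α) (r : ℝ) :
    Summable fun k : ℕ => (Real.Gamma (β + k * α))⁻¹ * r ^ k := by
  set M : ℝ := (2 * (|r| + 1)) ^ α⁻¹ with hMdef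
  have hM : 0 < M := by positivity
  have hMα : M ^ α = 2 * (|r| + 1) := by
    rw [hMdef, ← rpow_mul (by positivity), inv_mul_cancel₀ hα.ne', rpow_one]
  have hq : |r| / M ^ α < 1 := by
    rw [hMα, div_lt_one (by positivity)]
    linarith [abs_nonneg r]
  refine Summable.of_norm_bounded_eventually_nat
    (g := fun k => exp M * M ^ (1 - β) * (|r| / M ^ α) ^ k)
    ((summable_geometric_of_lt_one (by positivity) hq).mul_left _) ?_
  obtain ⟨N, hN⟩ := exists_nat_ge ((1 - β) / α)
  filter_upwards [Filter.eventually_ge_atTop N] with k hk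
  have hs : 1 ≤ β + k * α := by
    have h1 : (1 - β) / α ≤ k := hN.trans (by exact_mod_cast hk)
    rw [div_le_iff₀ hα] at h1
    linarith
  have hΓ := rpow_mul_exp_neg_le_Gamma hM hs
  have hΓ0 : 0 < Real.Gamma (β + k * α) := Real.Gamma_pos_of_pos (by linarith)
  have h2 : (Real.Gamma (β + k * α))⁻¹ ≤ (M ^ (β + k * α - 1) * exp (-M))⁻¹ :=
    inv_anti₀ (by positivity) hΓ
  have h3 : (M ^ (β + k * α - 1) * exp (-M))⁻¹ = exp M * M ^ (1 - β) * ((M ^ α) ^ k)⁻¹ := by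
    rw [mul_inv, ← exp_neg, neg_neg, ← rpow_neg hM.le, ← rpow_natCast, ← rpow_mul hM.le,
      ← rpow_neg hM.le, mul_comm, mul_assoc, ← rpow_add hM]
    congr 2
    ring
  rw [norm_mul, norm_pow, Real.norm_eq_abs, Real.norm_eq_abs, abs_of_pos (inv_pos.2 hΓ0), div_pow,
    div_eq_mul_inv, mul_comm (|r| ^ k), ← mul_assoc, ← h3]
  gcongr

lemma summable_deriv_coeff_mul_pow {c : ℕ → ℝ} (hc : ∀ r : ℝ, Summable fun k => c k * r ^ k)
    (r : ℝ) : Summable fun k : ℕ => ((k : ℝ) + 1) * c (k + 1) * r ^ k := by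
  have h := ((summable_nat_add_iff 1).2 (hc (2 * (|r| + 1)))).abs
  refine Summable.of_norm_bounded h fun k => ?_
  have h1 : ((k : ℝ) + 1) ≤ 2 ^ (k + 1) := by
    exact_mod_cast (Nat.lt_two_pow_self (n := k + 1)).le
  have h2 : |r| ^ k ≤ (|r| + 1) ^ (k + 1) :=
    (pow_le_pow_left₀ (abs_nonneg r) (by linarith) k).trans
      (pow_le_pow_right₀ (by linarith [abs_nonneg r]) k.le_succ)
  rw [Real.norm_eq_abs, abs_mul, abs_mul, abs_mul, abs_pow, abs_pow,
    abs_of_pos (by positivity : (0 : ℝ) < k + 1),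
    abs_of_pos (by positivity : (0 : ℝ) < 2 * (|r| + 1)), mul_pow]
  calc ((k : ℝ) + 1) * |c (k + 1)| * |r| ^ k = |c (k + 1)| * (((k : ℝ) + 1) * |r| ^ k) := by ring
    _ ≤ _ := by gcongr

lemma hasDerivAt_tsum_mul_pow {c : ℕ → ℝ} (hc : ∀ r : ℝ, Summable fun k => c k * r ^ k) (r : ℝ) :
    HasDerivAt (fun y : ℝ => ∑' k, c k * y ^ k) (∑' k : ℕ, ((k : ℝ) + 1) * c (k + 1) * r ^ k) r := by
  have hs := (summable_deriv_coeff_mul_pow hc (|r| + 1)).abs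
  have h := hasDerivAt_tsum_of_isPreconnected (𝕜 := ℝ) (t := Metric.ball 0 (|r| + 1))
    (g := fun (k : ℕ) y => c (k + 1) * y ^ (k + 1))
    (g' := fun (k : ℕ) y => ((k : ℝ) + 1) * c (k + 1) * y ^ k) (y₀ := r) (y := r) hs
    Metric.isOpen_ball (convex_ball 0 _).isPreconnected
    (fun k y _ => by
      have := (hasDerivAt_pow (k + 1) y).const_mul (c (k + 1))
      convert! this using 1
      push_cast
      ring)
    (fun k y hy => by
      rw [mem_ball_zero_iff, Real.norm_eq_abs] at hy
      rw [Real.norm_eq_abs, abs_mul, abs_mul _ ((|r| + 1) ^ k), abs_pow, abs_pow]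
      exact mul_le_mul_of_nonneg_left
        (pow_le_pow_left₀ (abs_nonneg y) (hy.le.trans (le_abs_self _)) k) (abs_nonneg _))
    (by simp) ((summable_nat_add_iff 1).2 (hc r)) (by simp)
  refine (h.const_add (c 0 * r ^ 0)).congr_of_eventuallyEq (Filter.Eventually.of_forall fun y => ?_)
  simp only [(hc y).tsum_eq_zero_add, pow_zero]

lemma intervalIntegrable_rpow_mul_one_sub_rpow {u v : ℝ} (hu : 0 < u) (hv : 0 < v) :
    IntervalIntegrable (fun x : ℝ => x ^ (u - 1) * (1 - x) ^ (v - 1)) volume 0 1 := by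
  have h := Complex.betaIntegral_convergent (u := u) (v := v) (by simpa) (by simpa)
  rw [intervalIntegrable_iff_integrableOn_Ioo_of_le zero_le_one] at h ⊢
  refine (Integrable.re h).congr ?_
  filter_upwards [ae_restrict_mem measurableSet_Ioo] with x hx
  have h1 : (0 : ℝ) ≤ 1 - x := by linarith [hx.2]
  have : (x : ℂ) ^ ((u : ℂ) - 1) * (1 - (x : ℂ)) ^ ((v : ℂ) - 1)
      = ((x ^ (u - 1) * (1 - x) ^ (v - 1) : ℝ) : ℂ) := by
    push_cast [Complex.ofReal_cpow hx.1.le, Complex.ofReal_cpow h1]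
    rfl
  simp [this]

lemma integral_rpow_mul_one_sub_rpow {u v : ℝ} (hu : 0 < u) (hv : 0 < v) :
    ∫ x in (0 : ℝ)..1, x ^ (u - 1) * (1 - x) ^ (v - 1)
      = Real.Gamma u * Real.Gamma v / Real.Gamma (u + v) := by
  have h := Complex.betaIntegral_eq_Gamma_mul_div u v (by simpa) (by simpa)
  rw [Complex.betaIntegral, ← Complex.ofReal_add, Complex.Gamma_ofReal, Complex.Gamma_ofReal,
    Complex.Gamma_ofReal] at h
  have h2 : ∫ x in (0 : ℝ)..1, (x : ℂ) ^ ((u : ℂ) - 1) * (1 - (x : ℂ)) ^ ((v : ℂ) - 1)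
      = ∫ x in (0 : ℝ)..1, ((x ^ (u - 1) * (1 - x) ^ (v - 1) : ℝ) : ℂ) := by
    refine intervalIntegral.integral_congr fun x hx => ?_
    rw [Set.uIcc_of_le zero_le_one] at hx
    have h1 : (0 : ℝ) ≤ 1 - x := by linarith [hx.2]
    push_cast [Complex.ofReal_cpow hx.1, Complex.ofReal_cpow h1]
    rfl
  rw [h2, intervalIntegral.integral_ofReal] at h
  exact_mod_cast h

/-- A function vanishing at both ends of `[0, 1]` and positive inside has a negative derivative
on average, with respect to an increasing power weight. -/
lemma integral_one_sub_rpow_mul_deriv_neg {α : ℝ} (hα : 0 < α) (hα1 : α < 1) {G G' : ℝ → ℝ}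
    (hG : ContinuousOn G (Set.Icc 0 1)) (hG' : ∀ x ∈ Set.Ioc (0 : ℝ) 1, HasDerivAt G (G' x) x)
    (hGint : IntervalIntegrable G' volume 0 1)
    (hwint : IntervalIntegrable (fun x => (1 - x) ^ (α - 1) * G' x) volume 0 1)
    (h0 : G 0 = 0) (h1 : G 1 = 0) (hpos : ∀ x ∈ Set.Ioo (0 : ℝ) 1, 0 < G x) :
    ∫ x in (0 : ℝ)..1, (1 - x) ^ (α - 1) * G' x < 0 := by
  set W : ℝ → ℝ := fun x => (1 - α) * (1 - x) ^ (α - 2) * G x with hW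
  have hWc : ∀ b < 1, ContinuousOn W (Set.Icc 0 b) := fun b hb => by
    refine ContinuousOn.mul (continuousOn_const.mul
      (ContinuousOn.rpow_const (by fun_prop) fun x hx => Or.inl ?_))
      (hG.mono (Set.Icc_subset_Icc_right hb.le))
    linarith [hx.2]
  have hWnn : ∀ x ∈ Set.Ico (0 : ℝ) 1, 0 ≤ W x := fun x hx => by
    have hGx : 0 ≤ G x := by
      rcases hx.1.eq_or_lt with h | h
      · rw [← h, h0]
      · exact (hpos x ⟨h, hx.2⟩).le
    have : 0 ≤ 1 - x := by linarith [hx.2]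
    have : 0 < 1 - α := by linarith
    positivity
  have hWint : ∀ a b, 0 ≤ a → a ≤ b → b < 1 → IntervalIntegrable W volume a b := fun a b ha hab hb =>
    ((hWc b hb).mono (Set.Icc_subset_Icc_left ha)).intervalIntegrable_of_Icc hab
  have hc : 0 < ∫ x in (0 : ℝ)..(1 / 2), W x := by
    refine intervalIntegral.intervalIntegral_pos_of_pos_on (hWint _ _ le_rfl (by norm_num)
      (by norm_num)) (fun x hx => ?_) (by norm_num)
    have hG := hpos x ⟨hx.1, by linarith [hx.2]⟩
    have : 0 < 1 - x := by linarith [hx.2]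
    have : 0 < 1 - α := by linarith
    positivity
  have key : ∀ b ∈ Set.Ico (1 / 2 : ℝ) 1, ∫ x in (0 : ℝ)..b, (1 - x) ^ (α - 1) * G' x
      ≤ (1 - b) ^ (α - 1) * G b - ∫ x in (0 : ℝ)..(1 / 2), W x := fun b hb => by
    have hb0 : (0 : ℝ) ≤ b := by linarith [hb.1]
    have hibp := intervalIntegral.integral_mul_deriv_eq_deriv_mul_of_hasDerivAt
      (u := fun x : ℝ => (1 - x) ^ (α - 1)) (u' := fun x => (1 - α) * (1 - x) ^ (α - 2))
      (v := G) (v' := G') (a := 0) (b := b)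
      (by
        rw [Set.uIcc_of_le hb0]
        refine ContinuousOn.rpow_const (by fun_prop) fun x hx => Or.inl ?_
        linarith [hx.2, hb.2])
      (by
        rw [Set.uIcc_of_le hb0]
        exact hG.mono (Set.Icc_subset_Icc_right hb.2.le))
      (fun x hx => by
        rw [min_eq_left hb0, max_eq_right hb0] at hx
        have h := ((hasDerivAt_id x).const_sub 1).rpow_const (p := α - 1)
          (Or.inl (by simp only [id]; linarith [hx.2, hb.2]))
        convert! h using 1
        simp only [id]
        ring_nf)
      (fun x hx => by
        rw [min_eq_left hb0, max_eq_right hb0] at hx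
        exact hG' x ⟨hx.1, by linarith [hx.2, hb.2]⟩)
      (by
        refine ContinuousOn.intervalIntegrable_of_Icc hb0 (continuousOn_const.mul
          (ContinuousOn.rpow_const (by fun_prop) fun x hx => Or.inl ?_))
        linarith [hx.2, hb.2])
      (hGint.mono_set (by
        rw [Set.uIcc_of_le hb0, Set.uIcc_of_le zero_le_one]
        exact Set.Icc_subset_Icc_right hb.2.le))
    have hsplit := intervalIntegral.integral_add_adjacent_intervals
      (hWint 0 (1 / 2) le_rfl (by norm_num) (by norm_num)) (hWint (1 / 2) b (by norm_num) hb.1 hb.2)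
    have hrest : 0 ≤ ∫ x in (1 / 2 : ℝ)..b, W x :=
      intervalIntegral.integral_nonneg hb.1 fun x hx => hWnn x
        ⟨by linarith [hx.1], by linarith [hx.2, hb.2]⟩
    rw [hibp, h0]
    linarith
  have hbd : Filter.Tendsto (fun b : ℝ => (1 - b) ^ (α - 1) * G b) (nhdsWithin 1 (Set.Iio 1))
      (nhds 0) := by
    have hs := (hasDerivAt_iff_tendsto_slope.1 (hG' 1 ⟨one_pos, le_rfl⟩)).mono_left
      (nhdsWithin_mono 1 (s := Set.Iio 1) fun y hy => (Set.mem_Iio.1 hy).ne)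
    have hp : Filter.Tendsto (fun b : ℝ => -(1 - b) ^ α) (nhdsWithin 1 (Set.Iio 1)) (nhds 0) := by
      have : ContinuousAt (fun b : ℝ => -(1 - b) ^ α) 1 :=
        (ContinuousAt.rpow_const (by fun_prop) (Or.inr hα.le)).neg
      have h := this.tendsto.mono_left (nhdsWithin_le_nhds (s := Set.Iio 1))
      simpa [hα.ne'] using h
    have := hp.mul hs
    rw [zero_mul] at this
    refine this.congr' ?_
    filter_upwards [self_mem_nhdsWithin] with b hb
    have hb' : 0 < 1 - b := by linarith [Set.mem_Iio.1 hb]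
    have hb1 : b - 1 ≠ 0 := by linarith
    rw [slope_def_field, h1, sub_zero, rpow_sub_one hb'.ne']
    field_simp
    ring
  have hlim : Filter.Tendsto (fun b : ℝ => ∫ x in (0 : ℝ)..b, (1 - x) ^ (α - 1) * G' x)
      (nhdsWithin 1 (Set.Iio 1)) (nhds (∫ x in (0 : ℝ)..1, (1 - x) ^ (α - 1) * G' x)) := by
    have h := intervalIntegral.continuousOn_primitive_interval (a := (0 : ℝ)) (b := 1) (μ := volume)
      (f := fun x : ℝ => (1 - x) ^ (α - 1) * G' x)
      (by
        rw [Set.uIcc_of_le zero_le_one]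
        exact (intervalIntegrable_iff_integrableOn_Icc_of_le zero_le_one).1 hwint)
    have h1 := h 1 Set.right_mem_uIcc
    rw [Set.uIcc_of_le zero_le_one] at h1
    refine h1.tendsto.mono_left ?_
    rw [← nhdsWithin_Ioo_eq_nhdsLT (zero_lt_one (α := ℝ))]
    exact nhdsWithin_mono _ Set.Ioo_subset_Icc_self
  have := le_of_tendsto_of_tendsto hlim (hbd.sub_const _) (by
    filter_upwards [Ico_mem_nhdsLT (by norm_num : (1 / 2 : ℝ) < 1)] with b hb using key b hb)
  linarith

/-- The two-parameter Mittag-Leffler function `E_{α,α}`. -/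
noncomputable def mittagLefflerDiag (α r : ℝ) : ℝ :=
  ∑' k : ℕ, (Real.Gamma (α + k * α))⁻¹ * r ^ k

lemma hasDerivAt_mittagLeffler {α : ℝ} (hα : 0 < α) (r : ℝ) :
    HasDerivAt (mittagLeffler α) (mittagLefflerDiag α r / α) r := by
  have h := hasDerivAt_tsum_mul_pow (summable_inv_Gamma_mul_pow (β := 1) hα) r
  have hfun : mittagLeffler α = fun y => ∑' k : ℕ, (Real.Gamma (1 + k * α))⁻¹ * y ^ k := by
    funext y
    simp only [mittagLeffler, div_eq_inv_mul]
  rw [hfun]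
  convert! h using 1
  rw [mittagLefflerDiag, ← tsum_div_const]
  refine tsum_congr fun k => ?_
  have hk : α + k * α ≠ 0 := by positivity
  have hΓ : Real.Gamma (α + k * α) ≠ 0 := (Real.Gamma_pos_of_pos (by positivity)).ne'
  have : (1 : ℝ) + ((k + 1 : ℕ) : ℝ) * α = (α + k * α) + 1 := by push_cast; ring
  rw [this, Real.Gamma_add_one hk]
  have hk' : (k : ℝ) + 1 ≠ 0 := by positivity
  have : α + k * α = ((k : ℝ) + 1) * α := by ring
  rw [this] at hΓ ⊢
  field_simp

lemma hasDerivAt_mittagLefflerDiag {α : ℝ} (hα : 0 < α) (r : ℝ) :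
    HasDerivAt (mittagLefflerDiag α)
      (∑' k : ℕ, ((k : ℝ) + 1) * (Real.Gamma (α + (k + 1 : ℕ) * α))⁻¹ * r ^ k) r :=
  hasDerivAt_tsum_mul_pow (summable_inv_Gamma_mul_pow (β := α) hα) r

lemma summable_succ_mul_inv_Gamma {α : ℝ} (hα : 0 < α) (r : ℝ) :
    Summable fun k : ℕ => ((k : ℝ) + 1) * (Real.Gamma (α + k * α))⁻¹ * r ^ k := by
  have h := summable_deriv_coeff_mul_pow (summable_inv_Gamma_mul_pow (β := 0) hα) r
  refine h.congr fun k => ?_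
  congr 4
  push_cast
  ring

lemma hasDerivAt_id_mul_mittagLefflerDiag {α : ℝ} (hα : 0 < α) (r : ℝ) :
    HasDerivAt (fun y => y * mittagLefflerDiag α y)
      (∑' k : ℕ, ((k : ℝ) + 1) * (Real.Gamma (α + k * α))⁻¹ * r ^ k) r := by
  have hs := summable_inv_Gamma_mul_pow (β := 0) hα
  have hk : ∀ k : ℕ, (0 : ℝ) + ((k + 1 : ℕ) : ℝ) * α = α + k * α := fun k => by push_cast; ring
  have h := hasDerivAt_tsum_mul_pow hs r
  simp only [hk] at h
  refine h.congr_of_eventuallyEq (Filter.Eventually.of_forall fun y => ?_)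
  simp only [(hs y).tsum_eq_zero_add, hk, mittagLefflerDiag, ← tsum_mul_left]
  simp only [Nat.cast_zero, zero_mul, add_zero, Real.Gamma_zero, inv_zero, zero_add]
  refine tsum_congr fun k => ?_
  ring

lemma integral_rpow_mul_deriv_id_mul_mittagLefflerDiag {α : ℝ} (hα : 0 < α) (r : ℝ) :
    ∫ x in (0 : ℝ)..1, x ^ (α - 1) * (1 - x) ^ (α - 1) *
        ∑' k : ℕ, ((k : ℝ) + 1) * (Real.Gamma (α + k * α))⁻¹ * (r * x ^ α) ^ k
      = Real.Gamma α *
        ∑' k : ℕ, ((k : ℝ) + 1) * (Real.Gamma (α + (k + 1 : ℕ) * α))⁻¹ * r ^ k := by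
  have hw := intervalIntegrable_rpow_mul_one_sub_rpow hα hα
  have hΓ : ∀ k : ℕ, 0 < Real.Gamma (α + k * α) := fun k => Real.Gamma_pos_of_pos (by positivity)
  have hQ := summable_succ_mul_inv_Gamma hα
  have hterm : ∀ k : ℕ, ∫ x in (0 : ℝ)..1, x ^ (α - 1) * (1 - x) ^ (α - 1) *
      (((k : ℝ) + 1) * (Real.Gamma (α + k * α))⁻¹ * (r * x ^ α) ^ k)
      = Real.Gamma α * (((k : ℝ) + 1) * (Real.Gamma (α + (k + 1 : ℕ) * α))⁻¹ * r ^ k) := by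
    intro k
    have hB := integral_rpow_mul_one_sub_rpow (u := α + k * α) (v := α) (by positivity) hα
    have : ∫ x in (0 : ℝ)..1, x ^ (α - 1) * (1 - x) ^ (α - 1) *
        (((k : ℝ) + 1) * (Real.Gamma (α + k * α))⁻¹ * (r * x ^ α) ^ k)
        = ∫ x in (0 : ℝ)..1, (((k : ℝ) + 1) * (Real.Gamma (α + k * α))⁻¹ * r ^ k) *
          (x ^ (α + k * α - 1) * (1 - x) ^ (α - 1)) := by
      refine intervalIntegral.integral_congr_ae (Filter.Eventually.of_forall fun x hx => ?_)
      rw [Set.uIoc_of_le zero_le_one] at hx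
      have hx0 : 0 < x := hx.1
      have : x ^ (α + k * α - 1) = x ^ (α - 1) * (x ^ α) ^ k := by
        rw [← rpow_natCast, ← rpow_mul hx0.le, ← rpow_add hx0]
        congr 1
        ring
      rw [this, mul_pow]
      ring
    rw [this, intervalIntegral.integral_const_mul, hB]
    have : α + ((k + 1 : ℕ) : ℝ) * α = α + k * α + α := by push_cast; ring
    rw [this]
    have := (hΓ k).ne'
    field_simp
  have hsum := intervalIntegral.hasSum_integral_of_dominated_convergence (μ := volume)
    (a := 0) (b := 1)
    (F := fun (k : ℕ) (x : ℝ) => x ^ (α - 1) * (1 - x) ^ (α - 1) *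
      (((k : ℝ) + 1) * (Real.Gamma (α + k * α))⁻¹ * (r * x ^ α) ^ k))
    (f := fun x => x ^ (α - 1) * (1 - x) ^ (α - 1) *
      ∑' k : ℕ, ((k : ℝ) + 1) * (Real.Gamma (α + k * α))⁻¹ * (r * x ^ α) ^ k)
    (bound := fun k x => x ^ (α - 1) * (1 - x) ^ (α - 1) *
      (((k : ℝ) + 1) * (Real.Gamma (α + k * α))⁻¹ * |r| ^ k))
    (fun k => by
      refine Measurable.aestronglyMeasurable ?_
      fun_prop)
    (fun k => Filter.Eventually.of_forall fun x hx => by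
      rw [Set.uIoc_of_le zero_le_one] at hx
      have hx0 : 0 ≤ x := hx.1.le
      have hx1 : 0 ≤ 1 - x := by linarith [hx.2]
      have := hΓ k
      rw [Real.norm_eq_abs, abs_mul,
        abs_of_nonneg (by positivity : 0 ≤ x ^ (α - 1) * (1 - x) ^ (α - 1)),
        abs_mul, abs_of_nonneg (by positivity : 0 ≤ ((k : ℝ) + 1) * (Real.Gamma (α + k * α))⁻¹),
        abs_pow, abs_mul, abs_of_nonneg (by positivity : 0 ≤ x ^ α)]
      gcongr
      exact mul_le_of_le_one_right (abs_nonneg r) (rpow_le_one hx0 hx.2 hα.le))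
    (Filter.Eventually.of_forall fun x _ => (hQ |r|).mul_left _)
    (by
      simp only [tsum_mul_left]
      exact hw.mul_const _)
    (Filter.Eventually.of_forall fun x _ => (hQ (r * x ^ α)).hasSum.mul_left _)
  simp only [hterm] at hsum
  rw [← hsum.tsum_eq, tsum_mul_left]

/-- `E_{α,α}` cannot have a zero `r` such that it is positive to the right of `r`. -/
lemma mittagLefflerDiag_ne_zero {α : ℝ} (hα : 0 < α) (hα1 : α < 1) {r : ℝ} (hr : r < 0)
    (hpos : ∀ y, r < y → 0 < mittagLefflerDiag α y) : mittagLefflerDiag α r ≠ 0 := by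
  intro hzero
  set Q : ℝ → ℝ := fun y => ∑' k : ℕ, ((k : ℝ) + 1) * (Real.Gamma (α + k * α))⁻¹ * y ^ k with hQ
  have hPc : Continuous (mittagLefflerDiag α) :=
    continuous_iff_continuousAt.2 fun y => (hasDerivAt_mittagLefflerDiag hα y).continuousAt
  have hQc : Continuous Q := continuous_iff_continuousAt.2 fun y =>
    (hasDerivAt_tsum_mul_pow (summable_succ_mul_inv_Gamma hα) y).continuousAt
  have hxα : Continuous fun x : ℝ => x ^ α := continuous_rpow_const hα.le
  have hQx : Continuous fun x : ℝ => Q (r * x ^ α) := hQc.comp (continuous_const.mul hxα)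
  have hneg := integral_one_sub_rpow_mul_deriv_neg hα hα1
    (G := fun x => x ^ α * mittagLefflerDiag α (r * x ^ α))
    (G' := fun x => α * (x ^ (α - 1) * Q (r * x ^ α)))
    (hxα.mul (hPc.comp (continuous_const.mul hxα))).continuousOn
    (fun x hx => by
      have hr0 : r ≠ 0 := hr.ne
      have hin := (hasDerivAt_rpow_const (p := α) (Or.inl hx.1.ne')).const_mul r
      have h := ((hasDerivAt_id_mul_mittagLefflerDiag hα (r * x ^ α)).comp x hin).const_mul r⁻¹
      convert! h using 1
      · funext y
        simp only [Function.comp]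
        field_simp
      · change _ = r⁻¹ * (Q (r * x ^ α) * (r * (α * x ^ (α - 1))))
        field_simp)
    (by
      refine IntervalIntegrable.const_mul ?_ _
      exact (intervalIntegral.intervalIntegrable_rpow' (by linarith)).mul_continuousOn
        hQx.continuousOn)
    (by
      have h := ((intervalIntegrable_rpow_mul_one_sub_rpow hα hα).mul_continuousOn
        hQx.continuousOn).const_mul α
      refine h.congr_ae (Filter.Eventually.of_forall fun x => ?_)
      ring)
    (by simp [hα.ne'])
    (by simp [hzero])
    (fun x hx => by
      have hxpos := rpow_pos_of_pos hx.1 α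
      refine mul_pos hxpos (hpos _ ?_)
      have := rpow_lt_one hx.1.le hx.2 hα
      nlinarith)
  have hid := integral_rpow_mul_deriv_id_mul_mittagLefflerDiag hα r
  have hderiv := hasDerivAt_mittagLefflerDiag hα r
  set D := ∑' k : ℕ, ((k : ℝ) + 1) * (Real.Gamma (α + (k + 1 : ℕ) * α))⁻¹ * r ^ k
  have hcongr : ∫ x in (0 : ℝ)..1, (1 - x) ^ (α - 1) * (α * (x ^ (α - 1) * Q (r * x ^ α)))
      = α * (Real.Gamma α * D) := by
    rw [← hid, ← intervalIntegral.integral_const_mul]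
    refine intervalIntegral.integral_congr fun x _ => ?_
    simp only [hQ]
    ring
  rw [hcongr] at hneg
  have hD : D < 0 := by
    have h1 : 0 < α * Real.Gamma α := mul_pos hα (Real.Gamma_pos_of_pos hα)
    by_contra! hD
    nlinarith [mul_nonneg h1.le hD]
  have hslope := (hasDerivAt_iff_tendsto_slope.1 hderiv).mono_left
    (nhdsWithin_mono r (s := Set.Ioi r) fun y hy => (Set.mem_Ioi.1 hy).ne')
  refine hD.not_ge (ge_of_tendsto hslope ?_)
  filter_upwards [self_mem_nhdsWithin] with y hy
  rw [slope_def_field, hzero, sub_zero]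
  exact div_nonneg (hpos y hy).le (sub_nonneg.2 (Set.mem_Ioi.1 hy).le)

lemma mittagLefflerDiag_pos_of_nonneg {α : ℝ} (hα : 0 < α) {r : ℝ} (hr : 0 ≤ r) :
    0 < mittagLefflerDiag α r := by
  have hΓ : ∀ k : ℕ, 0 < Real.Gamma (α + k * α) := fun k => Real.Gamma_pos_of_pos (by positivity)
  refine (summable_inv_Gamma_mul_pow hα r).tsum_pos (fun k => ?_) 0 ?_
  · have := hΓ k
    positivity
  · have := hΓ 0
    rw [pow_zero]
    positivity

lemma mittagLefflerDiag_pos {α : ℝ} (hα : 0 < α) (hα1 : α < 1) (r : ℝ) :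
    0 < mittagLefflerDiag α r := by
  have hPc : Continuous (mittagLefflerDiag α) :=
    continuous_iff_continuousAt.2 fun y => (hasDerivAt_mittagLefflerDiag hα y).continuousAt
  by_contra! hr
  set S : Set ℝ := {y | mittagLefflerDiag α y ≤ 0} with hS
  have hlt : ∀ y ∈ S, y < 0 := fun y hy => by
    by_contra! h
    exact (mittagLefflerDiag_pos_of_nonneg hα h).not_ge hy
  have hbdd : BddAbove S := ⟨0, fun y hy => (hlt y hy).le⟩
  have hmem : sSup S ∈ S := (isClosed_le hPc continuous_const).csSup_mem ⟨r, hr⟩ hbdd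
  have hright : ∀ y, sSup S < y → 0 < mittagLefflerDiag α y := fun y hy => by
    by_contra! h
    exact hy.not_ge (le_csSup hbdd h)
  refine mittagLefflerDiag_ne_zero hα hα1 (hlt _ hmem) hright (le_antisymm hmem ?_)
  refine ge_of_tendsto (hPc.continuousAt.tendsto.mono_left
    (nhdsWithin_le_nhds (s := Set.Ioi (sSup S)))) ?_
  filter_upwards [self_mem_nhdsWithin] with y hy using (hright y hy).le

lemma strictMono_mittagLeffler {α : ℝ} (hα : 0 < α) (hα1 : α < 1) :
    StrictMono (mittagLeffler α) :=
  strictMono_of_deriv_pos fun r => by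
    rw [(hasDerivAt_mittagLeffler hα r).deriv]
    exact div_pos (mittagLefflerDiag_pos hα hα1 r) hα

lemma continuous_mittagLeffler {α : ℝ} (hα : 0 < α) : Continuous (mittagLeffler α) :=
  continuous_iff_continuousAt.2 fun y => (hasDerivAt_mittagLeffler hα y).continuousAt

lemma aCoeff_eq_integral_shift {α t x : ℝ} (hx : 0 < x) {k : ℕ} (hk : 1 ≤ k) :
    aCoeff α t x k = ∫ η in (-(π / (2 * x)))..(π / (2 * x)),
      mittagLeffler α ((1 - (η + k * π / x) ^ 2) * t ^ α) * Real.cos (x * η) := by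
  rw [aCoeff, if_neg (by omega)]
  have ha : π * (2 * (k : ℝ) - 1) / (2 * x) = -(π / (2 * x)) + k * π / x := by field_simp; ring
  have hb : π * (2 * (k : ℝ) + 1) / (2 * x) = π / (2 * x) + k * π / x := by field_simp; ring
  rw [ha, hb, ← intervalIntegral.integral_comp_add_right
    (fun ξ => mittagLeffler α ((1 - ξ ^ 2) * t ^ α) * Real.cos (x * ξ)),
    ← intervalIntegral.integral_const_mul]
  refine intervalIntegral.integral_congr fun η _ => ?_
  have : x * (η + k * π / x) = x * η + k * π := by field_simp
  have hsq : ((-1 : ℝ) ^ k) * (-1) ^ k = 1 := by rw [← mul_pow]; simp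
  simp only [this, Real.cos_add_nat_mul_pi]
  linear_combination (mittagLeffler α ((1 - (η + k * π / x) ^ 2) * t ^ α) * Real.cos (x * η)) * hsq

theorem aCoeff_strict_anti (α t x : ℝ) (hα : 0 < α) (hα1 : α < 1) (ht : 0 < t) (hx : 0 < x) :
    ∀ k : ℕ, 1 ≤ k → aCoeff α t x (k + 1) < aCoeff α t x k := by
  intro k hk
  rw [aCoeff_eq_integral_shift hx hk, aCoeff_eq_integral_shift hx (by omega)]
  have hE := continuous_mittagLeffler hα
  have hp : 0 < π / (2 * x) := by positivity
  have hlt : ∀ η, -(π / (2 * x)) ≤ η →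
      mittagLeffler α ((1 - (η + (k + 1 : ℕ) * π / x) ^ 2) * t ^ α)
        < mittagLeffler α ((1 - (η + k * π / x) ^ 2) * t ^ α) := fun η hη => by
    refine strictMono_mittagLeffler hα hα1 ?_
    have htα := rpow_pos_of_pos ht α
    have hk1 : (1 : ℝ) ≤ k := by exact_mod_cast hk
    have hd : π / x = 2 * (π / (2 * x)) := by field_simp
    have h1 : (k : ℝ) * π / x = k * (π / x) := by ring
    have h2 : ((k + 1 : ℕ) : ℝ) * π / x = k * (π / x) + π / x := by push_cast; ring
    have h0 : 0 < η + k * (π / x) := by nlinarith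
    rw [h1, h2]
    refine mul_lt_mul_of_pos_right ?_ htα
    nlinarith
  refine intervalIntegral.integral_lt_integral_of_continuousOn_of_le_of_exists_lt (by linarith)
    (by fun_prop) (by fun_prop) (fun η hη => ?_) ⟨0, ⟨by linarith, hp.le⟩, ?_⟩
  · refine mul_le_mul_of_nonneg_right (hlt η hη.1.le).le (Real.cos_nonneg_of_mem_Icc ?_)
    have hxp : x * (π / (2 * x)) = π / 2 := by field_simp
    constructor <;> nlinarith [hη.1, hη.2]
  · simpa using hlt 0 (by linarith)
end
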